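/- arXiv:2406.07838 — 6 statements merged into one kernel-verified Lean document; each statement's English description precedes it below -/
import Mathlib

section
/- Let n ≥ 1 and N = (N_0, …, N_n) ∈ ℤ^{n+1} with N_0 + ⋯ + N_n = 0 and F_n(N) nonempty, and set α_i = s_i and β_j = s_{n−1−j} for 0 ≤ i, j ≤ n−1. Then the infimum of ∏_{0 ≤ i, j ≤ n−1, i+j ≤ n} (1 − x_i y_j)^{−1} · ∏_{i=0}^{n−1} x_i^{−α_i} · ∏_{j=0}^{n−1} y_j^{−β_j} over all x, y ∈ ℝ_{>0}^{n} satisfying x_i y_j < 1 whenever i + j ≤ n, equals sup_{f ∈ F_n(N)} e^{H(f)}. -/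
open Finset

/-- The entropy-like function `h(t) = (t+1)·log(t+1) − t·log t` (with `h 0 = 0`
since `Real.log 0 = 0`). -/
noncomputable def entH (t : ℝ) : ℝ := (t + 1) * Real.log (t + 1) - t * Real.log t

/-- `f` is an integer flow on the complete graph `k_{n+1}` with netflow `N`:
`f i j` is the flow on the edge `(i,j)` for `i < j`, it vanishes for `i ≥ j`,
and the netflow at each vertex `i` is `N i`. -/
def IsIntFlow (n : ℕ) (N : Fin (n + 1) → ℤ) (f : Fin (n + 1) → Fin (n + 1) → ℕ) : Prop :=
  (∀ i j : Fin (n + 1), ¬ i < j → f i j = 0) ∧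
  ∀ i : Fin (n + 1),
    (∑ j : Fin (n + 1), if i < j then (f i j : ℤ) else 0) -
      (∑ k : Fin (n + 1), if k < i then (f k i : ℤ) else 0) = N i

/-- The Kostant partition function: the number of integer flows on the complete
graph `k_{n+1}` with netflow `N`. -/
noncomputable def Kn (n : ℕ) (N : Fin (n + 1) → ℤ) : ℕ :=
  Nat.card {f : Fin (n + 1) → Fin (n + 1) → ℕ // IsIntFlow n N f}

/-- The flow polytope of the complete graph `k_{n+1}` with netflow `N`. -/
def FlowPolytope (n : ℕ) (N : Fin (n + 1) → ℝ) : Set (Fin (n + 1) → Fin (n + 1) → ℝ) :=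
  {f | (∀ i j : Fin (n + 1), i < j → 0 ≤ f i j) ∧
    (∀ i j : Fin (n + 1), ¬ i < j → f i j = 0) ∧
    ∀ i : Fin (n + 1),
      (∑ j : Fin (n + 1), if i < j then f i j else 0) -
        (∑ k : Fin (n + 1), if k < i then f k i else 0) = N i}

/-- The flow entropy `H(f)`. -/
noncomputable def flowEntropy (n : ℕ) (N : Fin (n + 1) → ℝ)
    (f : Fin (n + 1) → Fin (n + 1) → ℝ) : ℝ :=
  (∑ i : Fin (n + 1), ∑ j : Fin (n + 1), if i < j then entH (f i j) else 0) +
  ∑ j : Fin (n + 1), if 0 < (j : ℕ) ∧ (j : ℕ) < n then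
    entH (∑ i : Fin (n + 1), if i < j then (N i - f i j) else 0) else 0

/-- Partial sums `s_k = N_0 + ⋯ + N_k`. -/
def sPartial (n : ℕ) (N : Fin (n + 1) → ℤ) (k : ℕ) : ℤ :=
  ∑ j : Fin (n + 1), if (j : ℕ) ≤ k then N j else 0

/-- Extend `(N_0,…,N_{n−1})` to the netflow vector `(N_0,…,N_{n−1},−∑ N_i)`. -/
def extend (n : ℕ) (N : Fin n → ℤ) : Fin (n + 1) → ℤ := Fin.snoc N (-∑ i, N i)

noncomputable def gFn (w : ℝ) : ℝ := -Real.log (1 - Real.exp (-w))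

lemma gFn_pos {w : ℝ} (hw : 0 < w) : 0 < gFn w := by
  unfold gFn
  have h1 : Real.exp (-w) < 1 := by rw [Real.exp_lt_one_iff]; linarith
  have := Real.log_neg (x := 1 - Real.exp (-w)) (by linarith) (by linarith [Real.exp_pos (-w)])
  linarith

lemma entH_zero : entH 0 = 0 := by simp [entH]

lemma entH_nonneg {a : ℝ} (ha : 0 ≤ a) : 0 ≤ entH a := by
  unfold entH
  rcases ha.eq_or_lt with rfl | ha
  · simp
  have h1 : Real.log a ≤ Real.log (a + 1) := Real.log_le_log ha (by linarith)
  have h2 : 0 ≤ Real.log (a + 1) := Real.log_nonneg (by linarith)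
  nlinarith

lemma entH_continuous : Continuous entH := by
  unfold entH
  have h := Real.continuous_mul_log
  exact (h.comp (continuous_id.add continuous_const)).sub h

lemma entH_le {a w : ℝ} (ha : 0 ≤ a) (hw : 0 < w) : entH a ≤ gFn w + a * w := by
  rcases ha.eq_or_lt with rfl | ha
  · simpa [entH_zero] using (gFn_pos hw).le
  have ht1 : Real.exp (-w) < 1 := by rw [Real.exp_lt_one_iff]; linarith
  have ht0 := Real.exp_pos (-w)
  have hlt : Real.log (Real.exp (-w)) = -w := Real.log_exp _
  unfold gFn entH
  set t := Real.exp (-w) with ht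
  have e1 := Real.log_le_sub_one_of_pos (x := (1 - t) * (a + 1)) (by nlinarith)
  have e2 := Real.log_le_sub_one_of_pos (x := t * (a + 1) / a) (by positivity)
  rw [Real.log_mul (by linarith) (by linarith)] at e1
  rw [Real.log_div (by positivity) (by positivity), Real.log_mul (by positivity) (by positivity), hlt] at e2
  have e3 := mul_le_mul_of_nonneg_left e2 ha.le
  have e4 : a * (t * (a + 1) / a - 1) = t * (a + 1) - a := by field_simp
  rw [e4] at e3
  nlinarith

lemma entH_eq {w : ℝ} (hw : 0 < w) :
    entH (Real.exp (-w) / (1 - Real.exp (-w))) = gFn w + Real.exp (-w) / (1 - Real.exp (-w)) * w := by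
  have ht1 : Real.exp (-w) < 1 := by rw [Real.exp_lt_one_iff]; linarith
  have ht0 := Real.exp_pos (-w)
  have hlt : Real.log (Real.exp (-w)) = -w := Real.log_exp _
  unfold gFn entH
  set t := Real.exp (-w) with ht
  have h1 : 1 - t ≠ 0 := by linarith
  have : t / (1 - t) + 1 = (1 - t)⁻¹ := by field_simp; ring
  rw [Real.log_div (by positivity) h1, this, Real.log_inv, hlt, ← this]
  ring

lemma gFn_hasDerivAt {w : ℝ} (hw : 0 < w) :
    HasDerivAt gFn (-(Real.exp (-w) / (1 - Real.exp (-w)))) w := by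
  have ht1 : Real.exp (-w) < 1 := by rw [Real.exp_lt_one_iff]; linarith
  have h1 : 1 - Real.exp (-w) ≠ 0 := by linarith
  have := (((hasDerivAt_neg w).exp.const_sub 1).log h1).neg
  have e : -(Real.exp (-w) / (1 - Real.exp (-w))) =
      -(-(Real.exp (-w) * -1) / (1 - Real.exp (-w))) := by rw [mul_neg_one, neg_neg]
  rw [e]
  exact this

lemma gFn_le {w C : ℝ} (hw : 0 < w) (h : gFn w ≤ C) : Real.exp (-C) ≤ w := by
  have ht1 : Real.exp (-w) < 1 := by rw [Real.exp_lt_one_iff]; linarith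
  unfold gFn at h
  have h2 : Real.exp (-C) ≤ 1 - Real.exp (-w) := by
    rw [← Real.le_log_iff_exp_le (by linarith)]; linarith
  linarith [Real.add_one_le_exp (-w)]

section general
variable {E V : Type*} [Fintype E] [Fintype V] (M : E → V → ℝ)

noncomputable def wOf (u : V → ℝ) (e : E) : ℝ := ∑ v, M e v * u v

noncomputable def phiOf (b : V → ℝ) (u : V → ℝ) : ℝ := ∑ e, gFn (wOf M u e) + ∑ v, b v * u v

lemma pair_eq (a : E → ℝ) (u : V → ℝ) :
    ∑ v, (∑ e, M e v * a e) * u v = ∑ e, a e * wOf M u e := by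
  simp only [wOf, Finset.sum_mul, Finset.mul_sum]
  rw [Finset.sum_comm]
  refine Finset.sum_congr rfl fun e _ => Finset.sum_congr rfl fun v _ => by ring

lemma wOf_continuous (e : E) : Continuous fun u : V → ℝ => wOf M u e := by
  unfold wOf; fun_prop

lemma gFn_continuousOn : ContinuousOn gFn (Set.Ioi 0) := fun _ hw =>
  (gFn_hasDerivAt hw).continuousAt.continuousWithinAt

lemma exists_reg (a0 : E → ℝ) (ha0 : ∀ e, 0 ≤ a0 e) (b : V → ℝ) (hb : ∀ v, ∑ e, M e v * a0 e = b v)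
    (u1 : V → ℝ) (hu1 : ∀ e, 0 < wOf M u1 e) {ε : ℝ} (hε : 0 < ε) (hε1 : ε ≤ 1) :
    ∃ a : E → ℝ, (∀ e, 0 ≤ a e) ∧
      (∀ v, (∑ e, M e v * a e - b v) ^ 2 ≤ 2 * (phiOf M b u1 + ∑ v, u1 v ^ 2) * ε) ∧
      ∀ c, (∀ u, (∀ e, 0 < wOf M u e) → c ≤ phiOf M b u) → c ≤ ∑ e, entH (a e) := by
  classical
  set ψ : (V → ℝ) → ℝ := fun u => phiOf M b u + ε / 2 * ∑ v, u v ^ 2 with hψ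
  have hphi : ∀ u, phiOf M b u = ∑ e, (gFn (wOf M u e) + a0 e * wOf M u e) := by
    intro u
    rw [phiOf, Finset.sum_add_distrib, ← pair_eq]
    simp only [hb]
  set C := ψ u1 with hC
  set K : Set (V → ℝ) := {u | (∀ v, u v ∈ Set.Icc (-(2 * C / ε + 1)) (2 * C / ε + 1)) ∧
    ∀ e, Real.exp (-C) ≤ wOf M u e} with hK
  have hpos : ∀ u, (∀ e, 0 < wOf M u e) → ∀ e, 0 ≤ gFn (wOf M u e) + a0 e * wOf M u e :=
    fun u hu e => add_nonneg (gFn_pos (hu e)).le (mul_nonneg (ha0 e) (hu e).le)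
  have hsq : ∀ u : V → ℝ, ∀ v, u v ^ 2 ≤ ∑ v, u v ^ 2 := fun u v =>
    Finset.single_le_sum (f := fun v => u v ^ 2) (fun i _ => sq_nonneg _) (Finset.mem_univ v)
  have hphi0 : ∀ u, (∀ e, 0 < wOf M u e) → 0 ≤ phiOf M b u := fun u hu => by
    rw [hphi]; exact Finset.sum_nonneg fun e _ => hpos u hu e
  have hsub : ∀ u, (∀ e, 0 < wOf M u e) → ψ u ≤ C → u ∈ K := by
    intro u hu hle
    constructor
    · intro v
      have h1 : ε / 2 * u v ^ 2 ≤ C := by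
        have := mul_le_mul_of_nonneg_left (hsq u v) (by positivity : 0 ≤ ε / 2)
        have := hphi0 u hu
        simp only [hψ] at hle
        linarith
      have h2 : u v ^ 2 ≤ 2 * C / ε := by
        rw [le_div_iff₀ hε]; linarith
      constructor <;> nlinarith [sq_nonneg (u v - 1), sq_nonneg (u v + 1)]
    · intro e
      apply gFn_le (hu e)
      have h1 : gFn (wOf M u e) + a0 e * wOf M u e ≤ phiOf M b u := by
        rw [hphi]
        exact Finset.single_le_sum (f := fun e => gFn (wOf M u e) + a0 e * wOf M u e)
          (fun i _ => hpos u hu i) (Finset.mem_univ e)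
      have h2 : 0 ≤ ε / 2 * ∑ v, u v ^ 2 := by positivity
      have h3 := mul_nonneg (ha0 e) (hu e).le
      simp only [hψ] at hle
      linarith
  have hKpos : ∀ u ∈ K, ∀ e, 0 < wOf M u e := fun u hu e => (Real.exp_pos _).trans_le (hu.2 e)
  have hKc : IsCompact K := by
    have h1 : IsCompact (Set.pi Set.univ fun _ : V => Set.Icc (-(2 * C / ε + 1)) (2 * C / ε + 1)) :=
      isCompact_univ_pi fun _ => isCompact_Icc
    have h2 : IsClosed {u : V → ℝ | ∀ e, Real.exp (-C) ≤ wOf M u e} := by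
      simp only [Set.ofPred_forall]
      exact isClosed_iInter fun e => isClosed_le continuous_const (wOf_continuous M e)
    convert h1.inter_right h2 using 1
    ext u
    refine and_congr ⟨fun h v _ => h v, fun h v => h v (Set.mem_univ v)⟩ Iff.rfl
  have hcont : ContinuousOn ψ K := by
    simp only [hψ, phiOf]
    refine ContinuousOn.add (ContinuousOn.add ?_ (by fun_prop)) (by fun_prop)
    refine continuousOn_finsetSum _ fun e _ => ?_
    exact gFn_continuousOn.comp (wOf_continuous M e).continuousOn fun u hu => hKpos u hu e
  obtain ⟨u, huK, hmin⟩ := hKc.exists_isMinOn ⟨u1, hsub u1 hu1 le_rfl⟩ hcont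
  have hu := hKpos u huK
  have hmin' : ∀ u', (∀ e, 0 < wOf M u' e) → ψ u ≤ ψ u' := by
    intro u' hu'
    by_cases h : ψ u' ≤ C
    · exact hmin (hsub u' hu' h)
    · exact (hmin (hsub u1 hu1 le_rfl)).trans (not_le.1 h).le
  have hψu : ψ u ≤ C := hmin' u1 hu1
  set a : E → ℝ := fun e => Real.exp (-(wOf M u e)) / (1 - Real.exp (-(wOf M u e))) with ha
  have hstat : ∀ v, ∑ e, M e v * a e = b v + ε * u v := by
    intro v
    -- derivative along coordinate v
    set line : ℝ → V → ℝ := fun s => Function.update u v (u v + s) with hline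
    have hl0 : line 0 = u := by simp [hline]
    have hld : ∀ v', HasDerivAt (fun s => line s v') (if v' = v then 1 else 0) 0 := by
      intro v'
      by_cases h : v' = v
      · subst h; simpa [hline] using (hasDerivAt_id (0:ℝ)).const_add (u v')
      · simpa [hline, h] using hasDerivAt_const (0:ℝ) (u v')
    have hwd : ∀ e, HasDerivAt (fun s => wOf M (line s) e) (M e v) 0 := by
      intro e
      have := HasDerivAt.fun_sum (u := Finset.univ) fun v' _ => (hld v').const_mul (M e v')
      simpa [wOf] using this
    have hgd : ∀ e, HasDerivAt (fun s => gFn (wOf M (line s) e)) (-(a e) * M e v) 0 := by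
      intro e
      have h1 : HasDerivAt gFn (-(a e)) (wOf M (line 0) e) := by
        rw [hl0]; exact gFn_hasDerivAt (hu e)
      exact HasDerivAt.comp (h₂ := gFn) (0:ℝ) h1 (hwd e)
    have hd1 : HasDerivAt (fun s => ∑ e, gFn (wOf M (line s) e)) (∑ e, -(a e) * M e v) 0 :=
      HasDerivAt.fun_sum fun e _ => hgd e
    have hd2 : HasDerivAt (fun s => ∑ v', b v' * line s v') (b v) 0 := by
      have := HasDerivAt.fun_sum (u := Finset.univ) fun v' _ => (hld v').const_mul (b v')
      simpa using this
    have hd3 : HasDerivAt (fun s => ∑ v', line s v' ^ 2) (2 * u v) 0 := by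
      have := HasDerivAt.fun_sum (u := Finset.univ) fun v' _ => (hld v').fun_pow 2
      simpa [hl0] using this
    have hd : HasDerivAt (fun s => ψ (line s)) (∑ e, -(a e) * M e v + b v + ε / 2 * (2 * u v)) 0 :=
      (hd1.add hd2).add (hd3.const_mul (ε / 2))
    have hloc : IsLocalMin (fun s => ψ (line s)) 0 := by
      have hev : ∀ᶠ s in nhds (0:ℝ), ∀ e, 0 < wOf M (line s) e := by
        rw [Filter.eventually_all]
        intro e
        exact (hwd e).continuousAt.eventually_const_lt (by simpa [hl0] using hu e)
      filter_upwards [hev] with s hs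
      rw [hl0]; exact hmin' _ hs
    have h0 := hloc.hasDerivAt_eq_zero hd
    have h1 : ∑ e, -(a e) * M e v = -∑ e, M e v * a e := by
      rw [← Finset.sum_neg_distrib]; exact Finset.sum_congr rfl fun e _ => by ring
    rw [h1] at h0
    linarith
  refine ⟨a, fun e => ?_, fun v => ?_, fun c hc => ?_⟩
  · have : Real.exp (-(wOf M u e)) < 1 := by rw [Real.exp_lt_one_iff]; linarith [hu e]
    exact div_nonneg (Real.exp_pos _).le (by linarith)
  · rw [hstat]
    have h1 := hsq u v
    have h2 := hphi0 u hu
    have h3 : 0 ≤ ∑ v, u1 v ^ 2 := by positivity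
    have h4 : ε / 2 * u v ^ 2 ≤ phiOf M b u1 + ∑ v, u1 v ^ 2 := by
      simp only [hψ, hC] at hψu
      nlinarith
    nlinarith
  · have h1 : ∑ e, entH (a e) = phiOf M b u + ε * ∑ v, u v ^ 2 := by
      have h2 : ∀ e, entH (a e) = gFn (wOf M u e) + a e * wOf M u e := fun e => entH_eq (hu e)
      simp only [h2, Finset.sum_add_distrib, ← pair_eq, hstat, phiOf]
      rw [add_assoc, Finset.mul_sum, ← Finset.sum_add_distrib]
      congr 1
      exact Finset.sum_congr rfl fun v _ => by ring
    rw [h1]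
    have : 0 ≤ ε * ∑ v, u v ^ 2 := by positivity
    linarith [hc u hu]

lemma exists_opt (a0 : E → ℝ) (ha0 : ∀ e, 0 ≤ a0 e) (b : V → ℝ) (hb : ∀ v, ∑ e, M e v * a0 e = b v)
    (u1 : V → ℝ) (hu1 : ∀ e, 0 < wOf M u1 e) :
    ∃ a : E → ℝ, (∀ e, 0 ≤ a e) ∧ (∀ v, ∑ e, M e v * a e = b v) ∧
      ∀ c, (∀ u, (∀ e, 0 < wOf M u e) → c ≤ phiOf M b u) → c ≤ ∑ e, entH (a e) := by
  set D := 2 * (phiOf M b u1 + ∑ v, u1 v ^ 2) with hD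
  have hε : ∀ k : ℕ, (0:ℝ) < 1 / ((k:ℝ) + 1) := fun k => by positivity
  have hε1 : ∀ k : ℕ, 1 / ((k:ℝ) + 1) ≤ 1 := fun k => by
    rw [div_le_one (by positivity)]; linarith [Nat.cast_nonneg (α := ℝ) k]
  choose a ha0' hab hac using fun k : ℕ => exists_reg M a0 ha0 b hb u1 hu1 (hε k) (hε1 k)
  set B := ∑ v, (|b v| + |D| + 1) * |u1 v| with hB
  have hbd : ∀ k e, a k e ≤ B / wOf M u1 e := by
    intro k e
    rw [le_div_iff₀ (hu1 e)]
    calc a k e * wOf M u1 e ≤ ∑ e, a k e * wOf M u1 e :=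
          Finset.single_le_sum (f := fun e => a k e * wOf M u1 e)
            (fun i _ => mul_nonneg (ha0' k i) (hu1 i).le) (Finset.mem_univ e)
      _ = ∑ v, (∑ e, M e v * a k e) * u1 v := (pair_eq M _ _).symm
      _ ≤ B := by
          refine Finset.sum_le_sum fun v _ => ?_
          refine (le_abs_self _).trans ?_
          rw [abs_mul]
          refine mul_le_mul_of_nonneg_right ?_ (abs_nonneg _)
          have h1 : (∑ e, M e v * a k e - b v) ^ 2 ≤ |D| := by
            refine (hab k v).trans ((le_abs_self _).trans ?_)
            rw [abs_mul, abs_of_pos (hε k)]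
            nlinarith [hε1 k, abs_nonneg D]
          have h2 : |∑ e, M e v * a k e - b v| ≤ |D| + 1 := by
            rw [abs_le]; constructor <;> nlinarith [sq_nonneg (∑ e, M e v * a k e - b v - 1), sq_nonneg (∑ e, M e v * a k e - b v + 1)]
          have h3 := abs_sub_abs_le_abs_sub (∑ e, M e v * a k e) (b v)
          linarith
  have hc : IsCompact (Set.pi Set.univ fun e : E => Set.Icc 0 (B / wOf M u1 e)) :=
    isCompact_univ_pi fun _ => isCompact_Icc
  obtain ⟨A, hA, θ, hθ, hlim⟩ := hc.tendsto_subseq (x := a) fun k => by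
    simp only [Set.mem_pi]; exact fun e _ => ⟨ha0' k e, hbd k e⟩
  have hlim' : ∀ e, Filter.Tendsto (fun k => a (θ k) e) Filter.atTop (nhds (A e)) :=
    fun e => (tendsto_pi_nhds.1 hlim) e
  refine ⟨A, fun e => (hA e (Set.mem_univ e)).1, fun v => ?_, fun c hcc => ?_⟩
  · have h1 : Filter.Tendsto (fun k => (∑ e, M e v * a (θ k) e - b v) ^ 2) Filter.atTop
        (nhds ((∑ e, M e v * A e - b v) ^ 2)) :=
      ((tendsto_finsetSum _ fun e _ => (hlim' e).const_mul (M e v)).sub_const _).pow 2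
    have h2 : Filter.Tendsto (fun k => D * (1 / ((θ k : ℝ) + 1))) Filter.atTop (nhds (D * 0)) :=
      (tendsto_one_div_add_atTop_nhds_zero_nat.comp hθ.tendsto_atTop).const_mul D
    have h3 := le_of_tendsto_of_tendsto' h1 h2 fun k => hab (θ k) v
    have h4 : (∑ e, M e v * A e - b v) ^ 2 = 0 := le_antisymm (by simpa using h3) (sq_nonneg _)
    have := pow_eq_zero_iff (two_ne_zero) |>.1 h4
    linarith
  · have h1 : Filter.Tendsto (fun k => ∑ e, entH (a (θ k) e)) Filter.atTop
        (nhds (∑ e, entH (A e))) :=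
      tendsto_finsetSum _ fun e _ => (entH_continuous.tendsto _).comp (hlim' e)
    exact ge_of_tendsto' h1 fun k => hac (θ k) c hcc

end general

noncomputable def phiM {m : ℕ} (S : Fin m → Fin m → Prop) [DecidableRel S] (r c u v : Fin m → ℝ) : ℝ :=
  (∑ i, ∑ j, if S i j then gFn (u i + v j) else 0) + ((∑ i, r i * u i) + ∑ j, c j * v j)

lemma sum_sub {m : ℕ} (S : Fin m → Fin m → Prop) [DecidableRel S] (F : Fin m → Fin m → ℝ) :
    ∑ e : {p : Fin m × Fin m // S p.1 p.2}, F e.1.1 e.1.2 = ∑ i, ∑ j, if S i j then F i j else 0 := by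
  rw [← Fintype.sum_prod_type' (f := fun i j => if S i j then F i j else 0), ← Finset.sum_filter]
  symm
  exact Finset.sum_subtype _ (by simp) (fun p : Fin m × Fin m => F p.1 p.2)

lemma exists_matrix {m : ℕ} (S : Fin m → Fin m → Prop) [DecidableRel S] (r c : Fin m → ℝ)
    (A0 : Fin m → Fin m → ℝ) (h0 : ∀ i j, 0 ≤ A0 i j) (hS : ∀ i j, ¬ S i j → A0 i j = 0)
    (hr : ∀ i, ∑ j, A0 i j = r i) (hc : ∀ j, ∑ i, A0 i j = c j) :
    ∃ A : Fin m → Fin m → ℝ, (∀ i j, 0 ≤ A i j) ∧ (∀ i j, ¬ S i j → A i j = 0) ∧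
      (∀ i, ∑ j, A i j = r i) ∧ (∀ j, ∑ i, A i j = c j) ∧
      ∀ C, (∀ u v, (∀ i j, S i j → 0 < u i + v j) → C ≤ phiM S r c u v) →
        C ≤ ∑ i, ∑ j, entH (A i j) := by
  classical
  let M : {p : Fin m × Fin m // S p.1 p.2} → (Fin m ⊕ Fin m) → ℝ := fun e =>
    Sum.elim (fun i => if e.1.1 = i then 1 else 0) (fun j => if e.1.2 = j then 1 else 0)
  have hw : ∀ u e, wOf M u e = u (Sum.inl e.1.1) + u (Sum.inr e.1.2) := by
    intro u e; simp [wOf, M]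
  have hext : ∀ A : Fin m → Fin m → ℝ, (∀ i j, ¬ S i j → A i j = 0) →
      ∀ i j, (if S i j then A i j else 0) = A i j := by
    intro A h i j; split_ifs with hh
    · rfl
    · exact (h i j hh).symm
  have hrow : ∀ A : Fin m → Fin m → ℝ, (∀ i j, ¬ S i j → A i j = 0) → ∀ i,
      ∑ e, M e (Sum.inl i) * A e.1.1 e.1.2 = ∑ j, A i j := by
    intro A h i
    have := sum_sub S (fun i' j => (if i' = i then 1 else 0) * A i' j)
    simp only [M, Sum.elim_inl]
    rw [this, Finset.sum_eq_single i]
    · simp [hext A h]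
    · intro b _ hb; simp [hb]
    · simp
  have hcol : ∀ A : Fin m → Fin m → ℝ, (∀ i j, ¬ S i j → A i j = 0) → ∀ j,
      ∑ e, M e (Sum.inr j) * A e.1.1 e.1.2 = ∑ i, A i j := by
    intro A h j
    have := sum_sub S (fun i j' => (if j' = j then 1 else 0) * A i j')
    simp only [M, Sum.elim_inr]
    rw [this]
    refine Finset.sum_congr rfl fun i _ => ?_
    rw [Finset.sum_eq_single j]
    · simp [hext A h]
    · intro b _ hb; simp [hb]
    · simp
  obtain ⟨a, ha, hab, hac⟩ := exists_opt M (fun e => A0 e.1.1 e.1.2) (fun e => h0 _ _) (Sum.elim r c)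
    (by rintro (i | j)
        · simpa [hr] using hrow A0 hS i
        · simpa [hc] using hcol A0 hS j) (fun _ => 1) (by intro e; rw [hw]; norm_num)
  let A : Fin m → Fin m → ℝ := fun i j => if h : S i j then a ⟨(i, j), h⟩ else 0
  have hA : ∀ e : {p : Fin m × Fin m // S p.1 p.2}, A e.1.1 e.1.2 = a e := by
    rintro ⟨⟨i, j⟩, h⟩
    simp only [A]; rw [dif_pos h]
  have hA0 : ∀ i j, ¬ S i j → A i j = 0 := fun i j h => by simp [A, h]
  refine ⟨A, fun i j => ?_, hA0, fun i => ?_, fun j => ?_, fun C hC => ?_⟩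
  · simp only [A]; split_ifs
    · exact ha _
    · exact le_rfl
  · rw [← hrow A hA0]; simpa [hA] using hab (Sum.inl i)
  · rw [← hcol A hA0]; simpa [hA] using hab (Sum.inr j)
  · have := hac C (fun u hu => by
      have h1 := hC (fun i => u (Sum.inl i)) (fun j => u (Sum.inr j)) (fun i j h => by
        have := hu ⟨(i, j), h⟩; rwa [hw] at this)
      refine h1.trans (le_of_eq ?_)
      simp only [phiOf, phiM, hw, Fintype.sum_sum_type, Sum.elim_inl, Sum.elim_inr]
      rw [sum_sub S (fun i j => gFn (u (Sum.inl i) + u (Sum.inr j)))])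
    refine this.trans (le_of_eq ?_)
    simp only [← hA]
    rw [sum_sub S (fun i j => entH (A i j))]
    refine Finset.sum_congr rfl fun i _ => Finset.sum_congr rfl fun j _ => ?_
    split_ifs with h
    · rfl
    · rw [hA0 i j h, entH_zero]

lemma weak_matrix {m : ℕ} (S : Fin m → Fin m → Prop) [DecidableRel S] (r c : Fin m → ℝ)
    (A : Fin m → Fin m → ℝ) (h0 : ∀ i j, 0 ≤ A i j) (hS : ∀ i j, ¬ S i j → A i j = 0)
    (hr : ∀ i, ∑ j, A i j = r i) (hc : ∀ j, ∑ i, A i j = c j) (u v : Fin m → ℝ)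
    (huv : ∀ i j, S i j → 0 < u i + v j) :
    ∑ i, ∑ j, entH (A i j) ≤ phiM S r c u v := by
  have h1 : (∑ i, r i * u i) + ∑ j, c j * v j = ∑ i, ∑ j, A i j * (u i + v j) := by
    simp only [← hr, ← hc, Finset.sum_mul, mul_add, Finset.sum_add_distrib]
    congr 1
    exact Finset.sum_comm
  rw [phiM, h1, ← Finset.sum_add_distrib]
  refine Finset.sum_le_sum fun i _ => ?_
  rw [← Finset.sum_add_distrib]
  refine Finset.sum_le_sum fun j _ => ?_
  split_ifs with h
  · exact entH_le (h0 i j) (huv i j h)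
  · rw [hS i j h]; simp [entH_zero]

def cutS (n : ℕ) (i j : Fin (n + 1)) : Prop := i < j ∨ (i = j ∧ 0 < (i : ℕ) ∧ (i : ℕ) < n)

instance (n : ℕ) : DecidableRel (cutS n) := fun i j => by unfold cutS; infer_instance

noncomputable def preS {n : ℕ} (N : Fin (n + 1) → ℝ) (j : Fin (n + 1)) : ℝ :=
  ∑ k, if k < j then N k else 0

noncomputable def slackF {n : ℕ} (N : Fin (n + 1) → ℝ) (f : Fin (n + 1) → Fin (n + 1) → ℝ)
    (j : Fin (n + 1)) : ℝ := ∑ k, if k < j then (N k - f k j) else 0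

noncomputable def matF {n : ℕ} (N : Fin (n + 1) → ℝ) (f : Fin (n + 1) → Fin (n + 1) → ℝ)
    (i j : Fin (n + 1)) : ℝ := (if i < j then f i j else 0) + if i = j then slackF N f j else 0

lemma slackF_eq {n : ℕ} (N : Fin (n + 1) → ℝ) (f : Fin (n + 1) → Fin (n + 1) → ℝ) (j) :
    slackF N f j = preS N j - ∑ k, if k < j then f k j else 0 := by
  rw [slackF, preS, ← Finset.sum_sub_distrib]
  refine Finset.sum_congr rfl fun k _ => ?_
  split_ifs <;> simp

lemma preS_zero {n : ℕ} (N : Fin (n + 1) → ℝ) : preS N 0 = 0 := by simp [preS]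

lemma preS_last {n : ℕ} (N : Fin (n + 1) → ℝ) (hN : ∑ i, N i = 0) :
    preS N (Fin.last n) + N (Fin.last n) = 0 := by
  rw [← hN, Fin.sum_univ_castSucc, preS, Fin.sum_univ_castSucc]
  simp [Fin.castSucc_lt_last]

lemma slackF_zero {n : ℕ} (N : Fin (n + 1) → ℝ) (f : Fin (n + 1) → Fin (n + 1) → ℝ) :
    slackF N f 0 = 0 := by simp [slackF]

lemma slackF_last {n : ℕ} (N : Fin (n + 1) → ℝ) (hN : ∑ i, N i = 0)
    (f : Fin (n + 1) → Fin (n + 1) → ℝ) (hf : f ∈ FlowPolytope n N) :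
    slackF N f (Fin.last n) = 0 := by
  have h := hf.2.2 (Fin.last n)
  have h1 : (∑ j : Fin (n + 1), if Fin.last n < j then f (Fin.last n) j else 0) = 0 :=
    Finset.sum_eq_zero fun j _ => by simp [not_lt.2 (Fin.le_last j)]
  rw [slackF_eq]
  linarith [preS_last N hN]

lemma slackF_nonneg {n : ℕ} (N : Fin (n + 1) → ℝ)
    (f : Fin (n + 1) → Fin (n + 1) → ℝ) (hf : f ∈ FlowPolytope n N) (m) :
    0 ≤ slackF N f m := by
  rw [slackF_eq]
  have h1 : preS N m = (∑ k, ∑ l, if k < m then (if k < l then f k l else 0) else 0) -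
      ∑ k, ∑ l, if l < m then (if k < l then f k l else 0) else 0 := by
    rw [Finset.sum_comm (f := fun k l => if l < m then (if k < l then f k l else 0) else 0),
      ← Finset.sum_sub_distrib, preS]
    refine Finset.sum_congr rfl fun k _ => ?_
    split_ifs with h
    · exact (hf.2.2 k).symm
    · simp
  have h2 : (∑ k, if k < m then f k m else 0) =
      ∑ k, ∑ l, if l = m then (if k < l then f k l else 0) else 0 := by simp
  rw [h1, h2, ← Finset.sum_sub_distrib, ← Finset.sum_sub_distrib]
  refine Finset.sum_nonneg fun k _ => ?_
  rw [← Finset.sum_sub_distrib, ← Finset.sum_sub_distrib]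
  refine Finset.sum_nonneg fun l _ => ?_
  have h3 := hf.1 k l
  by_cases hkl : k < l
  · have h4 := h3 hkl
    simp only [hkl, if_true]
    by_cases ha : l < m
    · simp [ha, hkl.trans ha, ha.ne]
    · by_cases hb : l = m
      · subst hb; simp [hkl]
      · simp only [ha, hb, if_false]; split_ifs <;> simpa using h4
  · simp [hkl]

lemma sum_matF_col {n : ℕ} (N : Fin (n + 1) → ℝ) (f : Fin (n + 1) → Fin (n + 1) → ℝ) (j) :
    ∑ i, matF N f i j = preS N j := by
  simp [matF, Finset.sum_add_distrib, slackF_eq]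

lemma sum_matF_row {n : ℕ} (N : Fin (n + 1) → ℝ)
    (f : Fin (n + 1) → Fin (n + 1) → ℝ) (hf : f ∈ FlowPolytope n N) (i) :
    ∑ j, matF N f i j = preS N i + N i := by
  have := hf.2.2 i
  simp only [matF, Finset.sum_add_distrib, slackF_eq, Finset.sum_ite_eq, Finset.mem_univ, if_true]
  linarith

lemma matF_nonneg {n : ℕ} (N : Fin (n + 1) → ℝ)
    (f : Fin (n + 1) → Fin (n + 1) → ℝ) (hf : f ∈ FlowPolytope n N) (i j) : 0 ≤ matF N f i j := by
  unfold matF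
  refine add_nonneg ?_ ?_
  · split_ifs with h
    · exact hf.1 i j h
    · exact le_rfl
  · split_ifs
    · exact slackF_nonneg N f hf j
    · exact le_rfl

lemma slackF_bdry {n : ℕ} (N : Fin (n + 1) → ℝ) (hN : ∑ i, N i = 0)
    (f : Fin (n + 1) → Fin (n + 1) → ℝ) (hf : f ∈ FlowPolytope n N) (j : Fin (n + 1))
    (h : ¬ (0 < (j : ℕ) ∧ (j : ℕ) < n)) : slackF N f j = 0 := by
  by_cases h0 : j = 0
  · subst h0; exact slackF_zero N f
  · have : j = Fin.last n := by
      apply Fin.ext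
      have h1 : (j : ℕ) ≠ 0 := fun h => h0 (Fin.ext h)
      have := j.2
      simp only [Fin.val_last]; omega
    subst this; exact slackF_last N hN f hf

lemma matF_off {n : ℕ} (N : Fin (n + 1) → ℝ) (hN : ∑ i, N i = 0)
    (f : Fin (n + 1) → Fin (n + 1) → ℝ) (hf : f ∈ FlowPolytope n N) (i j)
    (h : ¬ cutS n i j) : matF N f i j = 0 := by
  unfold cutS at h
  push Not at h
  unfold matF
  rw [if_neg (not_lt.2 h.1), zero_add]
  split_ifs with hij
  · subst hij
    exact slackF_bdry N hN f hf i fun hh => absurd hh.2 (not_lt.2 (h.2 rfl hh.1))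
  · rfl

lemma matF_entropy {n : ℕ} (N : Fin (n + 1) → ℝ) (hN : ∑ i, N i = 0)
    (f : Fin (n + 1) → Fin (n + 1) → ℝ) (hf : f ∈ FlowPolytope n N) :
    ∑ i, ∑ j, entH (matF N f i j) = flowEntropy n N f := by
  have h1 : ∀ i j, entH (matF N f i j) =
      (if i < j then entH (f i j) else 0) + if i = j then entH (slackF N f j) else 0 := by
    intro i j
    unfold matF
    by_cases h : i < j
    · simp [h, h.ne]
    · by_cases h' : i = j
      · simp [h']
      · simp [h, h', entH_zero]
  simp only [h1, Finset.sum_add_distrib, flowEntropy]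
  congr 1
  simp only [Finset.sum_ite_eq, Finset.mem_univ, if_true]
  refine Finset.sum_congr rfl fun j _ => ?_
  split_ifs with h
  · rfl
  · rw [slackF_bdry N hN f hf j h, entH_zero]

lemma mat_to_flow {n : ℕ} (N : Fin (n + 1) → ℝ)
    (A : Fin (n + 1) → Fin (n + 1) → ℝ) (h0 : ∀ i j, 0 ≤ A i j) (hS : ∀ i j, ¬ cutS n i j → A i j = 0)
    (hr : ∀ i, ∑ j, A i j = preS N i + N i) (hc : ∀ j, ∑ i, A i j = preS N j) :
    ∃ f ∈ FlowPolytope n N, matF N f = A := by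
  have hA : ∀ i j, A i j = (if i < j then A i j else 0) + if i = j then A i j else 0 := by
    intro i j
    by_cases h : i < j
    · simp [h, h.ne]
    · by_cases h' : i = j
      · simp [h']
      · simp only [h, h', if_false, add_zero]
        exact hS i j fun hh => hh.elim h fun hh => h' hh.1
  have hr' : ∀ i, (∑ j, if i < j then A i j else 0) + A i i = preS N i + N i := by
    intro i
    rw [← hr, Finset.sum_congr rfl fun j _ => hA i j, Finset.sum_add_distrib]
    simp
  have hc' : ∀ j, (∑ i, if i < j then A i j else 0) + A j j = preS N j := by
    intro j
    rw [← hc, Finset.sum_congr rfl fun i _ => hA i j, Finset.sum_add_distrib]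
    simp
  have e1 : ∀ i j, (if i < j then (if i < j then A i j else 0) else 0) = if i < j then A i j else 0 := by
    intro i j; split_ifs <;> rfl
  refine ⟨fun i j => if i < j then A i j else 0, ⟨fun i j h => ?_, fun i j h => ?_, fun i => ?_⟩, ?_⟩
  · simp [h, h0]
  · simp [h]
  · simp only [e1]
    linarith [hr' i, hc' i]
  · funext i j
    rw [hA i j, matF]
    simp only [e1]
    congr 1
    split_ifs with h
    · subst h
      rw [slackF_eq]
      simp only [e1]
      linarith [hc' i]
    · rfl

lemma exp_gFn {w : ℝ} (hw : 0 < w) : Real.exp (gFn w) = (1 - Real.exp (-w))⁻¹ := by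
  have ht1 : Real.exp (-w) < 1 := by rw [Real.exp_lt_one_iff]; linarith
  rw [gFn, Real.exp_neg, Real.exp_log (by linarith)]

lemma sPartial_eq (n : ℕ) (N : Fin (n + 1) → ℤ) (i : Fin n) :
    ((sPartial n N i : ℤ) : ℝ) = preS (fun i => (N i : ℝ)) i.succ := by
  simp only [sPartial, preS, Fin.lt_def, Fin.val_succ, Nat.lt_succ_iff]
  push_cast
  rfl

lemma preS_succ {n : ℕ} (N : Fin (n + 1) → ℝ) (i : Fin n) :
    preS N i.castSucc + N i.castSucc = preS N i.succ := by
  have : N i.castSucc = ∑ k, if k = i.castSucc then N k else 0 := by simp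
  rw [this, preS, preS, ← Finset.sum_add_distrib]
  refine Finset.sum_congr rfl fun k _ => ?_
  have e : k < i.succ ↔ k < i.castSucc ∨ k = i.castSucc := by
    simp only [Fin.lt_def, Fin.ext_iff, Fin.val_succ, Fin.val_castSucc]; omega
  by_cases h : k < i.castSucc
  · simp [h, e, h.ne]
  · simp [h, e]

lemma cap_eq (n : ℕ) (N : Fin (n + 1) → ℤ) (hN : ∑ i, (N i : ℝ) = 0) (u v : Fin (n + 1) → ℝ)
    (huv : ∀ i j, cutS n i j → 0 < u i + v j) (x y : Fin n → ℝ)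
    (hx : ∀ i, x i = Real.exp (-u i.castSucc)) (hy : ∀ j, y j = Real.exp (-v j.rev.succ)) :
    (∏ i : Fin n, ∏ j : Fin n,
              if (i : ℕ) + (j : ℕ) ≤ n then (1 - x i * y j)⁻¹ else 1) *
            (∏ i : Fin n, x i ^ (-sPartial n N i)) *
            (∏ j : Fin n, y j ^ (-sPartial n N (n - 1 - (j : ℕ)))) =
    Real.exp (phiM (cutS n) (fun i => preS (fun i => (N i : ℝ)) i + N i)
      (preS (fun i => (N i : ℝ))) u v) := by
  rw [phiM, Real.exp_add, Real.exp_add, ← mul_assoc]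
  congr 1
  congr 1
  · rw [Real.exp_sum, Fin.prod_univ_castSucc]
    have h1 : Real.exp (∑ j, if cutS n (Fin.last n) j then gFn (u (Fin.last n) + v j) else 0) = 1 := by
      rw [Finset.sum_eq_zero, Real.exp_zero]
      intro j _
      rw [if_neg]
      rintro (h | h)
      · exact absurd h (not_lt.2 (Fin.le_last j))
      · exact absurd h.2.2 (by simp)
    rw [h1, mul_one]
    refine Finset.prod_congr rfl fun i _ => ?_
    rw [Real.exp_sum, Fin.prod_univ_succ, if_neg, Real.exp_zero, one_mul]
    · rw [← Equiv.prod_comp Fin.revPerm]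
      refine Finset.prod_congr rfl fun m _ => ?_
      have hiff : (i : ℕ) + (Fin.revPerm m : Fin n) ≤ n ↔ cutS n i.castSucc m.succ := by
        have := i.2; have := m.2
        simp only [cutS, Fin.revPerm_apply, Fin.val_rev, Fin.lt_def, Fin.ext_iff, Fin.val_succ,
          Fin.val_castSucc]
        omega
      by_cases h : cutS n i.castSucc m.succ
      · rw [if_pos (hiff.2 h), if_pos h, exp_gFn (huv _ _ h), hx, hy, ← Real.exp_add]
        simp only [Fin.revPerm_apply, Fin.rev_rev]
        congr 3
        ring
      · rw [if_neg (mt hiff.1 h), if_neg h, Real.exp_zero]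
    · rintro (h | h)
      · exact absurd h (Fin.not_lt_zero _)
      · have := h.2.1
        rw [h.1] at this
        simp at this
  · rw [Real.exp_sum, Fin.prod_univ_castSucc, preS_last (fun i => (N i : ℝ)) hN]
    simp only [zero_mul, Real.exp_zero, mul_one]
    refine Finset.prod_congr rfl fun i _ => ?_
    rw [preS_succ (fun i => (N i : ℝ)), ← sPartial_eq, hx, ← Real.rpow_intCast, ← Real.exp_mul]
    congr 1
    push_cast
    ring
  · rw [Real.exp_sum, Fin.prod_univ_succ, preS_zero]
    simp only [zero_mul, Real.exp_zero, one_mul]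
    rw [← Equiv.prod_comp Fin.revPerm]
    refine Finset.prod_congr rfl fun m _ => ?_
    have hm : n - 1 - ((Fin.revPerm m : Fin n) : ℕ) = m := by
      have := m.2
      simp only [Fin.revPerm_apply, Fin.val_rev]; omega
    rw [hm, ← sPartial_eq, hy, ← Real.rpow_intCast, ← Real.exp_mul]
    simp only [Fin.revPerm_apply, Fin.rev_rev]
    congr 1
    push_cast
    ring

/-- **Proposition (capacity as a supremum of flow entropies).**
With `α_i = s_i` and `β_j = s_{n−1−j}`, the capacity
`inf ∏_{i+j ≤ n} (1 − x_i y_j)^{−1} · ∏ x_i^{−α_i} · ∏ y_j^{−β_j}`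
(over positive `x, y` with `x_i y_j < 1` whenever `i + j ≤ n`) equals
`sup_{f ∈ F_n(N)} e^{H(f)}`. -/
theorem capacity_eq_sup_exp_flowEntropy (n : ℕ) (hn : 1 ≤ n) (N : Fin (n + 1) → ℤ)
    (hsum : ∑ i, N i = 0)
    (hne : (FlowPolytope n fun i => (N i : ℝ)).Nonempty) :
    sInf {c : ℝ | ∃ x y : Fin n → ℝ, (∀ i, 0 < x i) ∧ (∀ j, 0 < y j) ∧
        (∀ i j : Fin n, (i : ℕ) + (j : ℕ) ≤ n → x i * y j < 1) ∧
        c = (∏ i : Fin n, ∏ j : Fin n,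
              if (i : ℕ) + (j : ℕ) ≤ n then (1 - x i * y j)⁻¹ else 1) *
            (∏ i : Fin n, x i ^ (-sPartial n N i)) *
            (∏ j : Fin n, y j ^ (-sPartial n N (n - 1 - (j : ℕ))))} =
    sSup ((fun f => Real.exp (flowEntropy n (fun i => (N i : ℝ)) f)) ''
      FlowPolytope n fun i => (N i : ℝ)) := by
  have hN : ∑ i, (N i : ℝ) = 0 := by exact_mod_cast hsum
  set R : Fin (n + 1) → ℝ := fun i => (N i : ℝ) with hR
  set Φ := phiM (cutS n) (fun i => preS R i + R i) (preS R) with hΦ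
  have hset : {c : ℝ | ∃ x y : Fin n → ℝ, (∀ i, 0 < x i) ∧ (∀ j, 0 < y j) ∧
        (∀ i j : Fin n, (i : ℕ) + (j : ℕ) ≤ n → x i * y j < 1) ∧
        c = (∏ i : Fin n, ∏ j : Fin n,
              if (i : ℕ) + (j : ℕ) ≤ n then (1 - x i * y j)⁻¹ else 1) *
            (∏ i : Fin n, x i ^ (-sPartial n N i)) *
            (∏ j : Fin n, y j ^ (-sPartial n N (n - 1 - (j : ℕ))))} =
      {c : ℝ | ∃ u v : Fin (n + 1) → ℝ, (∀ i j, cutS n i j → 0 < u i + v j) ∧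
        c = Real.exp (Φ u v)} := by
    ext c
    constructor
    · rintro ⟨x, y, hx, hy, hxy, rfl⟩
      have hx' : ∀ i : Fin n, x i = Real.exp (-(Fin.snoc (α := fun _ => ℝ) (fun i => -Real.log (x i)) 0 :
          Fin (n + 1) → ℝ) i.castSucc) := by
        intro i; simp [Real.exp_log (hx i)]
      have hy' : ∀ j : Fin n, y j = Real.exp (-(Fin.cons (α := fun _ => ℝ) 0
          (fun j => -Real.log (y j.rev)) : Fin (n + 1) → ℝ) j.rev.succ) := by
        intro j; simp [Real.exp_log (hy j)]
      refine ⟨_, _, ?_, cap_eq n N hN _ _ ?_ x y hx' hy'⟩ <;>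
      · intro i j hij
        have hi : (i : ℕ) < n := by
          have := j.2
          rcases hij with h | h
          · rw [Fin.lt_def] at h; omega
          · exact h.2.2
        have hj : 0 < (j : ℕ) := by
          rcases hij with h | h
          · rw [Fin.lt_def] at h; omega
          · rw [← h.1]; exact h.2.1
        obtain ⟨i', rfl⟩ : ∃ i' : Fin n, i = i'.castSucc := ⟨⟨i, hi⟩, rfl⟩
        obtain ⟨j', rfl⟩ : ∃ j' : Fin n, j = j'.succ :=
          Fin.exists_succ_eq.2 (fun h => by simp [h] at hj) |>.imp fun _ h => h.symm
        have hle : (i' : ℕ) + (j'.rev : Fin n) ≤ n := by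
          have := i'.2; have := j'.2
          simp only [cutS, Fin.lt_def, Fin.ext_iff, Fin.val_succ, Fin.val_castSucc] at hij
          simp only [Fin.val_rev]
          omega
        have h1 := hxy i' j'.rev hle
        have h2 := Real.log_neg (mul_pos (hx i') (hy j'.rev)) h1
        rw [Real.log_mul (hx i').ne' (hy _).ne'] at h2
        simp only [Fin.snoc_castSucc, Fin.cons_succ]
        linarith
    · rintro ⟨u, v, huv, rfl⟩
      refine ⟨fun i => Real.exp (-u i.castSucc), fun j => Real.exp (-v j.rev.succ),
        fun i => Real.exp_pos _, fun j => Real.exp_pos _, ?_,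
        (cap_eq n N hN u v huv _ _ (fun _ => rfl) (fun _ => rfl)).symm⟩
      intro i j hij
      rw [← Real.exp_add, Real.exp_lt_one_iff]
      have := huv i.castSucc j.rev.succ (by
        have := i.2; have := j.2
        simp only [cutS, Fin.lt_def, Fin.ext_iff, Fin.val_succ, Fin.val_castSucc, Fin.val_rev]
        omega)
      linarith
  rw [hset]
  set T := {c : ℝ | ∃ u v : Fin (n + 1) → ℝ, (∀ i j, cutS n i j → 0 < u i + v j) ∧
        c = Real.exp (Φ u v)} with hT
  have hTne : T.Nonempty := ⟨_, fun _ => 1, fun _ => 1, fun _ _ _ => by norm_num, rfl⟩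
  have hweak : ∀ f ∈ FlowPolytope n R, ∀ c ∈ T, Real.exp (flowEntropy n R f) ≤ c := by
    rintro f hf c ⟨u, v, huv, rfl⟩
    rw [Real.exp_le_exp, ← matF_entropy R hN f hf]
    exact weak_matrix _ _ _ _ (matF_nonneg R f hf) (matF_off R hN f hf) (sum_matF_row R f hf)
      (sum_matF_col R f) u v huv
  obtain ⟨f0, hf0⟩ := hne
  have hTpos : 0 < sInf T :=
    (Real.exp_pos _).trans_le (le_csInf hTne (hweak f0 hf0))
  have hTbdd : BddBelow T := ⟨_, hweak f0 hf0⟩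
  apply le_antisymm
  · obtain ⟨A, hA0, hAS, hAr, hAc, hopt⟩ := exists_matrix (cutS n) (fun i => preS R i + R i) (preS R)
      (matF R f0) (matF_nonneg R f0 hf0) (matF_off R hN f0 hf0) (sum_matF_row R f0 hf0)
      (sum_matF_col R f0)
    obtain ⟨f, hf, rfl⟩ := mat_to_flow R A hA0 hAS hAr hAc
    have h1 := hopt (Real.log (sInf T)) fun u v huv => by
      rw [Real.log_le_iff_le_exp hTpos]
      exact csInf_le hTbdd ⟨u, v, huv, rfl⟩
    rw [matF_entropy R hN f hf, Real.log_le_iff_le_exp hTpos] at h1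
    refine h1.trans (le_csSup ?_ ⟨f, hf, rfl⟩)
    obtain ⟨c, hc⟩ := hTne
    exact ⟨c, by rintro _ ⟨g, hg, rfl⟩; exact hweak g hg c hc⟩
  · refine csSup_le ⟨_, f0, hf0, rfl⟩ ?_
    rintro _ ⟨f, hf, rfl⟩
    exact le_csInf hTne (hweak f hf)
end

section
/- Let n ≥ 1, let N = (N_0, …, N_{n−1}, −∑_{i=0}^{n−1} N_i) and M = (M_0, …, M_{n−1}, −∑_{i=0}^{n−1} M_i) where all N_i and M_i are nonnegative integers, and suppose ∑_{i=0}^{k} N_i ≥ ∑_{i=0}^{k} M_i for every 0 ≤ k ≤ n−1. Then K_n(N) ≥ K_n(M). -/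
open Finset

/-- Every edge of a flow is bounded by the weighted sum `∑ -i * N i`. -/
lemma flow_le (n : ℕ) (N : Fin (n + 1) → ℤ) (f : Fin (n + 1) → Fin (n + 1) → ℕ)
    (hf : IsIntFlow n N f) (a b : Fin (n + 1)) :
    (f a b : ℤ) ≤ ∑ i : Fin (n + 1), -((i : ℕ) : ℤ) * N i := by
  obtain ⟨h0, h1⟩ := hf
  have hs : ∑ i : Fin (n + 1), -((i : ℕ) : ℤ) * N i
      = ∑ i : Fin (n + 1), ∑ j : Fin (n + 1),
        if i < j then (((j : ℕ) : ℤ) - ((i : ℕ) : ℤ)) * (f i j : ℤ) else 0 := by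
    have e : ∀ i : Fin (n + 1), -((i : ℕ) : ℤ) * N i =
        (∑ j : Fin (n + 1), if i < j then -((i : ℕ) : ℤ) * (f i j : ℤ) else 0) +
        (∑ k : Fin (n + 1), if k < i then ((i : ℕ) : ℤ) * (f k i : ℤ) else 0) := by
      intro i
      rw [← h1 i, mul_sub, Finset.mul_sum, Finset.mul_sum, sub_eq_add_neg,
        ← Finset.sum_neg_distrib]
      congr 1
      · exact Finset.sum_congr rfl fun j _ => by split_ifs <;> simp
      · exact Finset.sum_congr rfl fun j _ => by split_ifs <;> simp
    rw [Finset.sum_congr rfl fun i _ => e i, Finset.sum_add_distrib]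
    rw [Finset.sum_comm (f := fun (i k : Fin (n + 1)) =>
      if k < i then ((i : ℕ) : ℤ) * (f k i : ℤ) else 0), ← Finset.sum_add_distrib]
    refine Finset.sum_congr rfl fun i _ => ?_
    rw [← Finset.sum_add_distrib]
    refine Finset.sum_congr rfl fun j _ => ?_
    split_ifs <;> ring
  have hnn : ∀ i j : Fin (n + 1),
      (f i j : ℤ) ≤ if i < j then (((j : ℕ) : ℤ) - ((i : ℕ) : ℤ)) * (f i j : ℤ) else 0 := by
    intro i j
    split_ifs with h
    · have : ((i : ℕ) : ℤ) + 1 ≤ ((j : ℕ) : ℤ) := by exact_mod_cast h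
      nlinarith [Int.natCast_nonneg (f i j)]
    · simp [h0 i j h]
  have hnn' : ∀ i j : Fin (n + 1),
      0 ≤ if i < j then (((j : ℕ) : ℤ) - ((i : ℕ) : ℤ)) * (f i j : ℤ) else 0 :=
    fun i j => (Int.natCast_nonneg _).trans (hnn i j)
  rw [hs]
  calc (f a b : ℤ) ≤ _ := hnn a b
    _ ≤ ∑ j : Fin (n + 1),
        if a < j then (((j : ℕ) : ℤ) - ((a : ℕ) : ℤ)) * (f a j : ℤ) else 0 :=
      Finset.single_le_sum (f := fun j : Fin (n + 1) =>
        if a < j then (((j : ℕ) : ℤ) - ((a : ℕ) : ℤ)) * (f a j : ℤ) else 0)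
        (fun j _ => hnn' a j) (Finset.mem_univ b)
    _ ≤ _ := Finset.single_le_sum (f := fun i : Fin (n + 1) => ∑ j : Fin (n + 1),
        if i < j then (((j : ℕ) : ℤ) - ((i : ℕ) : ℤ)) * (f i j : ℤ) else 0)
        (fun i _ => Finset.sum_nonneg fun j _ => hnn' i j) (Finset.mem_univ a)

lemma flow_finite (n : ℕ) (N : Fin (n + 1) → ℤ) :
    Finite {f : Fin (n + 1) → Fin (n + 1) → ℕ // IsIntFlow n N f} := by
  refine Set.Finite.to_subtype (s := {f | IsIntFlow n N f}) ?_
  refine Set.Finite.subset (Set.finite_Iic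
    (fun _ _ => (∑ i : Fin (n + 1), -((i : ℕ) : ℤ) * N i).toNat)) ?_
  intro f hf a b
  have := flow_le n N f hf a b
  show f a b ≤ (∑ i : Fin (n + 1), -((i : ℕ) : ℤ) * N i).toNat
  omega

/-- The path flow `c` adding `D (i+1)` on the edge `(i, i+1)`. -/
def pathFlow (n : ℕ) (D : ℕ → ℕ) (i j : Fin (n + 1)) : ℕ :=
  if (j : ℕ) = i + 1 then D j else 0

lemma pathFlow_out (n : ℕ) (D : ℕ → ℕ) (i : Fin (n + 1)) :
    (∑ j : Fin (n + 1), if i < j then (pathFlow n D i j : ℤ) else 0)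
      = if (i : ℕ) < n then (D (i + 1) : ℤ) else 0 := by
  split_ifs with h
  · rw [Finset.sum_eq_single (⟨i + 1, by omega⟩ : Fin (n + 1))]
    · simp [pathFlow, Fin.lt_def]
    · intro j _ hj
      have : (j : ℕ) ≠ i + 1 := fun e => hj (Fin.ext e)
      simp [pathFlow, this]
    · simp
  · refine Finset.sum_eq_zero fun j _ => ?_
    have : ¬ i < j := by rw [Fin.lt_def]; omega
    simp [this]

lemma pathFlow_in (n : ℕ) (D : ℕ → ℕ) (hD : D 0 = 0) (i : Fin (n + 1)) :
    (∑ k : Fin (n + 1), if k < i then (pathFlow n D k i : ℤ) else 0) = (D i : ℤ) := by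
  by_cases h : (i : ℕ) = 0
  · rw [h, hD]
    refine Finset.sum_eq_zero fun j _ => ?_
    have : ¬ j < i := by rw [Fin.lt_def]; omega
    simp [this]
  · rw [Finset.sum_eq_single (⟨i - 1, by omega⟩ : Fin (n + 1))]
    · have h1 : (i : ℕ) = i - 1 + 1 := by omega
      have h2 : (i : ℕ) - 1 < i := by omega
      simp only [pathFlow, Fin.lt_def, if_pos h2, if_pos h1]
    · intro j _ hj
      have : (i : ℕ) ≠ j + 1 := fun e => hj (Fin.ext (by simp; omega))
      simp [pathFlow, this]
    · simp

/-- **Proposition (dominance monotonicity of the Kostant partition function).**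
If `(N_0,…,N_{n−1})` dominates `(M_0,…,M_{n−1})` (all entries nonnegative),
then `K_n(N_0,…,N_{n−1},−∑ N_i) ≥ K_n(M_0,…,M_{n−1},−∑ M_i)`. -/
theorem kostant_monotone_of_dominance (n : ℕ) (hn : 1 ≤ n) (N M : Fin n → ℕ)
    (hdom : ∀ k : Fin n,
      (∑ i : Fin n, if i ≤ k then (M i : ℤ) else 0) ≤
        ∑ i : Fin n, if i ≤ k then (N i : ℤ) else 0) :
    Kn n (extend n fun i => (M i : ℤ)) ≤ Kn n (extend n fun i => (N i : ℤ)) := by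
  classical
  set E : ℕ → ℤ := fun k => ∑ i : Fin n, if (i : ℕ) < k then ((N i : ℤ) - M i) else 0 with hE
  have hE0 : E 0 = 0 := by simp [hE]
  have hEs : ∀ i : Fin n, E (i + 1) = E i + ((N i : ℤ) - M i) := by
    intro i
    have : ((N i : ℤ) - M i) = ∑ j : Fin n, if j = i then ((N j : ℤ) - M j) else 0 := by simp
    rw [this]
    simp only [hE]
    rw [← Finset.sum_add_distrib]
    refine Finset.sum_congr rfl fun j _ => ?_
    have h3 : j = i ↔ (j : ℕ) = i := Fin.ext_iff
    simp only [h3]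
    split_ifs <;> first | omega | simp
  have hEn : E n = ∑ i : Fin n, ((N i : ℤ) - M i) := by simp [hE]
  have hpos : ∀ k : ℕ, k ≤ n → 0 ≤ E k := by
    intro k hk
    rcases k with _ | k
    · exact hE0.ge
    · have h := hdom ⟨k, hk⟩
      rw [← sub_nonneg, ← Finset.sum_sub_distrib] at h
      refine h.trans_eq (Finset.sum_congr rfl fun j _ => ?_)
      have h3 : j ≤ ⟨k, hk⟩ ↔ (j : ℕ) < k + 1 := by rw [Fin.le_def]; simp [Nat.lt_succ_iff]
      simp only [h3]
      split_ifs <;> simp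
  set D : ℕ → ℕ := fun k => (E k).toNat with hD
  have hDE : ∀ k : ℕ, k ≤ n → (D k : ℤ) = E k := fun k hk => Int.toNat_of_nonneg (hpos k hk)
  have hD0 : D 0 = 0 := by simp [hD, hE0]
  have key : ∀ f, IsIntFlow n (extend n fun i => (M i : ℤ)) f →
      IsIntFlow n (extend n fun i => (N i : ℤ)) (fun i j => f i j + pathFlow n D i j) := by
    rintro f ⟨h0, h1⟩
    refine ⟨fun i j hij => ?_, fun i => ?_⟩
    · have : (j : ℕ) ≠ i + 1 := by rw [Fin.lt_def] at hij; omega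
      simp [h0 i j hij, pathFlow, this]
    · have ho := pathFlow_out n D i
      have hi := pathFlow_in n D hD0 i
      have hf := h1 i
      have e1 : (∑ j : Fin (n + 1), if i < j then ((f i j + pathFlow n D i j : ℕ) : ℤ) else 0)
          = (∑ j : Fin (n + 1), if i < j then (f i j : ℤ) else 0)
          + ∑ j : Fin (n + 1), if i < j then (pathFlow n D i j : ℤ) else 0 := by
        rw [← Finset.sum_add_distrib]
        exact Finset.sum_congr rfl fun j _ => by split_ifs <;> simp
      have e2 : (∑ k : Fin (n + 1), if k < i then ((f k i + pathFlow n D k i : ℕ) : ℤ) else 0)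
          = (∑ k : Fin (n + 1), if k < i then (f k i : ℤ) else 0)
          + ∑ k : Fin (n + 1), if k < i then (pathFlow n D k i : ℤ) else 0 := by
        rw [← Finset.sum_add_distrib]
        exact Finset.sum_congr rfl fun j _ => by split_ifs <;> simp
      rw [e1, e2, ho, hi]
      rw [hDE i (by omega)]
      revert hf
      refine Fin.lastCases ?_ (fun k => ?_) i
      · intro hf
        simp only [extend, Fin.snoc_last] at hf ⊢
        simp only [Fin.val_last, lt_irrefl, if_false]
        rw [hEn, Finset.sum_sub_distrib]
        linarith
      · intro hf
        simp only [extend, Fin.snoc_castSucc] at hf ⊢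
        simp only [Fin.val_castSucc, k.isLt, if_true]
        rw [hDE (k + 1) (by omega), hEs k]
        linarith
  have := flow_finite n (extend n fun i => (N i : ℤ))
  refine Nat.card_le_card_of_injective (fun f => ⟨_, key f.1 f.2⟩) ?_
  intro f g hfg
  refine Subtype.ext (funext fun i => funext fun j => ?_)
  have := congrFun (congrFun (congrArg Subtype.val hfg) i) j
  simpa using this
end

section
/- Let n ≥ 2 and let N_0, …, N_{n−1} be nonnegative integers. Then K_n(N_0, …, N_{n−1}, −∑_{i=0}^{n−1} N_i) = ∑_f ∏_{i=0}^{n−2} (f_{i,n−1} + 1), where the sum is over all integer flows f on the complete graph k_n (with vertices 0, …, n−1) with netflow (N_0, …, N_{n−2}, −∑_{i=0}^{n−2} N_i). -/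
open Finset

theorem flow_iff (n : ℕ) (N : Fin n → ℕ) (f : Fin (n + 1) → Fin (n + 1) → ℕ) :
    IsIntFlow n (extend n fun i => (N i : ℤ)) f ↔
      (∀ i j : Fin (n + 1), ¬ i < j → f i j = 0) ∧
        ∀ i : Fin n, ∑ j, f i.castSucc j = N i + ∑ k, f k i.castSucc := by
  unfold IsIntFlow
  refine and_congr_right fun h0 => ?_
  have h1 : ∀ i, (∑ j : Fin (n + 1), if i < j then (f i j : ℤ) else 0) = ∑ j, (f i j : ℤ) := by
    intro i
    refine Finset.sum_congr rfl fun j _ => ?_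
    split_ifs with h
    · rfl
    · simp [h0 i j h]
  have h2 : ∀ i, (∑ k : Fin (n + 1), if k < i then (f k i : ℤ) else 0) = ∑ k, (f k i : ℤ) := by
    intro i
    refine Finset.sum_congr rfl fun j _ => ?_
    split_ifs with h
    · rfl
    · simp [h0 j i h]
  simp only [h1, h2]
  have key : ∀ i : Fin n, (∑ j, f i.castSucc j = N i + ∑ k, f k i.castSucc) ↔
      ((∑ j, (f i.castSucc j : ℤ)) - ∑ k, (f k i.castSucc : ℤ) = N i) := by
    intro i
    rw [sub_eq_iff_eq_add]
    exact_mod_cast Iff.rfl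
  simp only [key]
  constructor
  · intro h i
    have := h i.castSucc
    simpa [extend] using this
  · intro h i
    have tot : ∑ i : Fin (n + 1), ((∑ j, (f i j : ℤ)) - ∑ k, (f k i : ℤ)) = 0 := by
      rw [Finset.sum_sub_distrib, Finset.sum_comm, sub_self]
    rw [Fin.sum_univ_castSucc, Finset.sum_congr rfl (fun i _ => h i)] at tot
    refine Fin.lastCases ?_ (fun i => ?_) i
    · simp only [extend, Fin.snoc_last]
      linarith
    · simpa [extend] using h i

def mergeFlow {m : ℕ} (g : Fin (m + 3) → Fin (m + 3) → ℕ) : Fin (m + 2) → Fin (m + 2) → ℕ :=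
  Fin.snoc (α := fun _ => Fin (m + 2) → ℕ)
    (fun i : Fin (m + 1) => Fin.snoc (α := fun _ => ℕ) (fun j => g i.castSucc.castSucc j.castSucc.castSucc)
      (g i.castSucc.castSucc (Fin.last (m + 1)).castSucc +
        g i.castSucc.castSucc (Fin.last (m + 2))))
    (fun _ => 0)

def splitFlow {m : ℕ} (a : ℕ) (f : Fin (m + 2) → Fin (m + 2) → ℕ) (c : Fin (m + 1) → ℕ) :
    Fin (m + 3) → Fin (m + 3) → ℕ :=
  Fin.snoc (α := fun _ => Fin (m + 3) → ℕ)
    (Fin.snoc (α := fun _ => Fin (m + 3) → ℕ)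
      (fun i : Fin (m + 1) => Fin.snoc (α := fun _ => ℕ)
        (Fin.snoc (α := fun _ => ℕ) (fun j => f i.castSucc j.castSucc) (c i))
        (f i.castSucc (Fin.last (m + 1)) - c i))
      (Fin.snoc (α := fun _ => ℕ) (fun _ => 0) (a + ∑ i, c i)))
    (fun _ => 0)

theorem flow2_iff (m : ℕ) (N : Fin (m + 1) → ℕ) (f : Fin (m + 2) → Fin (m + 2) → ℕ) :
    IsIntFlow (m + 1) (extend (m + 1) fun i => (N i : ℤ)) f ↔
      ((∀ i j : Fin (m + 1), ¬ i < j → f i.castSucc j.castSucc = 0) ∧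
        (∀ j, f (Fin.last _) j = 0)) ∧
        ∀ i : Fin (m + 1), ∑ j : Fin (m + 1), f i.castSucc j.castSucc + f i.castSucc (Fin.last _)
          = N i + ∑ k : Fin (m + 1), f k.castSucc i.castSucc := by
  rw [flow_iff]
  have A : (∀ i j : Fin (m + 1 + 1), ¬ i < j → f i j = 0) ↔
      ((∀ i j : Fin (m + 1), ¬ i < j → f i.castSucc j.castSucc = 0) ∧
        (∀ j, f (Fin.last _) j = 0)) := by
    constructor
    · intro h
      exact ⟨fun i j hij => h _ _ (by simpa using hij), fun j => h _ _ (by simp [Fin.le_last])⟩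
    · rintro ⟨h, h'⟩ i j
      refine Fin.lastCases ?_ (fun i => ?_) i
      · intro _; exact h' j
      · refine Fin.lastCases ?_ (fun j => ?_) j
        · intro hh; exact absurd (Fin.castSucc_lt_last i) hh
        · intro hh; exact h i j (by simpa using hh)
  rw [A]
  refine and_congr_right fun h => forall_congr' fun i => ?_
  rw [Fin.sum_univ_castSucc (fun j => f i.castSucc j),
    Fin.sum_univ_castSucc (fun k => f k i.castSucc), h.2, add_zero]

theorem flow3_iff (m : ℕ) (N : Fin (m + 2) → ℕ) (g : Fin (m + 3) → Fin (m + 3) → ℕ) :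
    IsIntFlow (m + 2) (extend (m + 2) fun i => (N i : ℤ)) g ↔
      ((∀ i j : Fin (m + 1), ¬ i < j → g i.castSucc.castSucc j.castSucc.castSucc = 0) ∧
        (∀ j : Fin (m + 2), g (Fin.last _).castSucc j.castSucc = 0) ∧
        (∀ j, g (Fin.last _) j = 0)) ∧
        (∀ i : Fin (m + 1), ∑ j : Fin (m + 1), g i.castSucc.castSucc j.castSucc.castSucc +
          (g i.castSucc.castSucc (Fin.last (m + 1)).castSucc
            + g i.castSucc.castSucc (Fin.last _))
          = N i.castSucc + ∑ k : Fin (m + 1), g k.castSucc.castSucc i.castSucc.castSucc) ∧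
        g (Fin.last _).castSucc (Fin.last _) = N (Fin.last _) +
          ∑ k : Fin (m + 1), g k.castSucc.castSucc (Fin.last _).castSucc := by
  rw [flow2_iff]
  have A : (∀ i j : Fin (m + 1 + 1), ¬ i < j → g i.castSucc j.castSucc = 0) ↔
      ((∀ i j : Fin (m + 1), ¬ i < j → g i.castSucc.castSucc j.castSucc.castSucc = 0) ∧
        (∀ j : Fin (m + 2), g (Fin.last _).castSucc j.castSucc = 0)) := by
    constructor
    · intro h
      exact ⟨fun i j hij => h _ _ (by simpa using hij), fun j => h _ _ (by simp [Fin.le_last])⟩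
    · rintro ⟨h, h'⟩ i j
      refine Fin.lastCases ?_ (fun i => ?_) i
      · intro _; exact h' j
      · refine Fin.lastCases ?_ (fun j => ?_) j
        · intro hh; exact absurd (Fin.castSucc_lt_last i) hh
        · intro hh; exact h i j (by simpa using hh)
  rw [A, and_assoc (c := ∀ j, g (Fin.last (m + 2)) j = 0)]
  refine and_congr_right fun h => ?_
  rw [Fin.forall_fin_succ']
  refine and_congr (forall_congr' fun i => ?_) ?_
  · rw [Fin.sum_univ_castSucc (fun j : Fin (m + 2) => g i.castSucc.castSucc j.castSucc),
      Fin.sum_univ_castSucc (fun k : Fin (m + 2) => g k.castSucc i.castSucc.castSucc),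
      h.2.1, add_zero, add_assoc]
  · rw [Fin.sum_univ_castSucc (fun k : Fin (m + 2) => g k.castSucc (Fin.last (m + 1)).castSucc)]
    simp only [h.2.1, Finset.sum_const_zero, zero_add, add_zero]

def flowEquiv (m : ℕ) (N : Fin (m + 2) → ℕ) :
    {g : Fin (m + 3) → Fin (m + 3) → ℕ //
      IsIntFlow (m + 2) (extend (m + 2) fun i => (N i : ℤ)) g} ≃
    Σ f : {f : Fin (m + 2) → Fin (m + 2) → ℕ //
          IsIntFlow (m + 1) (extend (m + 1) fun i : Fin (m + 1) => (N i.castSucc : ℤ)) f},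
      {c : Fin (m + 1) → ℕ // c ≤ fun i => f.1 i.castSucc (Fin.last (m + 1))} where
  toFun g := ⟨⟨mergeFlow g.1, by
      have h := (flow3_iff m N g.1).1 g.2
      rw [flow2_iff m (fun i => N i.castSucc)]
      refine ⟨⟨?_, ?_⟩, ?_⟩
      · simpa [mergeFlow] using h.1.1
      · simp [mergeFlow]
      · simpa [mergeFlow] using h.2.1⟩,
    ⟨fun i => g.1 i.castSucc.castSucc (Fin.last (m + 1)).castSucc, by
      intro i
      simp [mergeFlow]⟩⟩
  invFun x := ⟨splitFlow (N (Fin.last _)) x.1.1 x.2.1, by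
      obtain ⟨⟨f, hf⟩, c, hc⟩ := x
      have h := (flow2_iff m (fun i => N i.castSucc) f).1 hf
      rw [flow3_iff]
      refine ⟨⟨?_, ?_, ?_⟩, ?_, ?_⟩
      · simpa [splitFlow] using h.1.1
      · simp [splitFlow]
      · simp [splitFlow]
      · intro i
        have h1 := h.2 i
        have h2 := hc i
        simp only [splitFlow, Fin.snoc_castSucc, Fin.snoc_last]
        rw [Nat.add_sub_cancel' h2]
        exact h1
      · simp [splitFlow]⟩
  left_inv := by
    rintro ⟨g, hg⟩
    have h := (flow3_iff m N g).1 hg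
    apply Subtype.ext
    funext i j
    refine Fin.lastCases ?_ (fun i => ?_) i
    · simp [splitFlow, h.1.2.2]
    · refine Fin.lastCases ?_ (fun i => ?_) i
      · refine Fin.lastCases ?_ (fun j => ?_) j
        · simp [splitFlow, h.2.2]
        · simp [splitFlow, h.1.2.1]
      · refine Fin.lastCases ?_ (fun j => ?_) j
        · simp [splitFlow, mergeFlow]
        · refine Fin.lastCases ?_ (fun j => ?_) j
          · simp [splitFlow]
          · simp [splitFlow, mergeFlow]
  right_inv := by
    rintro ⟨⟨f, hf⟩, c, hc⟩
    have h := (flow2_iff m (fun i => N i.castSucc) f).1 hf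
    apply Sigma.subtype_ext
    · apply Subtype.ext
      funext i j
      refine Fin.lastCases ?_ (fun i => ?_) i
      · simp [mergeFlow, h.1.2]
      · refine Fin.lastCases ?_ (fun j => ?_) j
        · have h2 := hc i
          simp only [mergeFlow, splitFlow, Fin.snoc_castSucc, Fin.snoc_last]
          exact Nat.add_sub_cancel' h2
        · simp [splitFlow, mergeFlow]
    · funext i
      simp [splitFlow]

theorem card_le_fun {k : ℕ} (F : Fin k → ℕ) :
    Nat.card {c : Fin k → ℕ // c ≤ F} = ∏ i, (F i + 1) := by
  have : Nat.card {c : Fin k → ℕ // c ≤ F} = (Finset.Iic F).card := by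
    rw [← Nat.card_eq_finsetCard]
    exact Nat.card_congr (Equiv.subtypeEquivRight (by simp))
  rw [this, Pi.card_Iic]
  simp

/-- **Proposition (generating algorithm).** For `n = m + 2 ≥ 2` and nonnegative
integers `N_0, …, N_{n−1}`,
`K_n(N_0,…,N_{n−1},−∑ N_i) = ∑_f ∏_{i=0}^{n−2} (f_{i,n−1} + 1)`,
where the sum ranges over the integer flows on the complete graph `k_n`
(vertices `0,…,n−1`) with netflow `(N_0,…,N_{n−2},−∑_{i≤n−2} N_i)`. -/
theorem kostant_generating_algorithm (m : ℕ) (N : Fin (m + 2) → ℕ) :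
    Kn (m + 2) (extend (m + 2) fun i => (N i : ℤ)) =
      ∑ᶠ f : {f : Fin (m + 2) → Fin (m + 2) → ℕ //
          IsIntFlow (m + 1) (extend (m + 1) fun i : Fin (m + 1) => (N i.castSucc : ℤ)) f},
        ∏ i : Fin (m + 1), (f.1 i.castSucc (Fin.last (m + 1)) + 1) := by
  unfold Kn
  rw [Nat.card_congr (flowEquiv m N)]
  simp only [← card_le_fun]
  set A := {f : Fin (m + 2) → Fin (m + 2) → ℕ //
          IsIntFlow (m + 1) (extend (m + 1) fun i : Fin (m + 1) => (N i.castSucc : ℤ)) f}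
  have hfin : ∀ f : A, Finite
      {c : Fin (m + 1) → ℕ // c ≤ fun i => f.1 i.castSucc (Fin.last (m + 1))} := fun f =>
    (Set.finite_Iic (fun i : Fin (m + 1) => f.1 i.castSucc (Fin.last (m + 1)))).to_subtype
  have hne : ∀ f : A, Nonempty
      {c : Fin (m + 1) → ℕ // c ≤ fun i => f.1 i.castSucc (Fin.last (m + 1))} := fun f =>
    ⟨⟨_, le_rfl⟩⟩
  rcases finite_or_infinite A with hA | hA
  · have := Fintype.ofFinite A
    rw [finsum_eq_sum_of_fintype, Nat.card_sigma]
  · rw [finsum_of_infinite_support, Nat.card_eq_zero_of_infinite]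
    have : (Function.support fun f : A => Nat.card
      {c : Fin (m + 1) → ℕ // c ≤ fun i => f.1 i.castSucc (Fin.last (m + 1))}) = Set.univ := by
      ext f
      simp [Nat.card_pos.ne']
    rw [this]
    exact Set.infinite_univ
end

section
/- Let n ≥ 2 and let t > 0 be a real number. The set of extreme points of the flow polytope F_n(t, 0, …, 0, −t) has exactly 2^{n−1} elements, and its average (1/2^{n−1}) · ∑_{v extreme} v is the flow f given by: f_{0,n} = t·2^{−(n−1)}; f_{0,j} = t·2^{−j} for 1 ≤ j ≤ n−1; f_{i,n} = t·2^{−(n−i)} for 1 ≤ i ≤ n−1; and f_{i,j} = t·2^{−(j−i+1)} for 1 ≤ i < j ≤ n−1. -/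
open Finset

def cryEdge {n : ℕ} (T : Finset (Fin (n + 1))) (i j : Fin (n + 1)) : Prop :=
  i < j ∧ i ∈ T ∧ j ∈ T ∧ ∀ k ∈ T, i < k → ¬ k < j

open Classical in
noncomputable def cryPath {n : ℕ} (t : ℝ) (T : Finset (Fin (n + 1))) :
    Fin (n + 1) → Fin (n + 1) → ℝ :=
  fun i j => if cryEdge T i j then t else 0

def cryN (n : ℕ) (t : ℝ) : Fin (n + 1) → ℝ :=
  fun i => if (i : ℕ) = 0 then t else if (i : ℕ) = n then -t else 0

lemma cryEdge_out {n : ℕ} {T : Finset (Fin (n + 1))} {i : Fin (n + 1)}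
    (hi : i ∈ T) (hl : Fin.last n ∈ T) (h : i ≠ Fin.last n) :
    ∃ j, ∀ k, cryEdge T i k ↔ k = j := by
  have hne : (T.filter (fun k => i < k)).Nonempty :=
    ⟨Fin.last n, by simp [hl, Fin.lt_last_iff_ne_last, h]⟩
  have hm := Finset.min'_mem _ hne
  have hle : ∀ k ∈ T.filter (fun k => i < k), (T.filter (fun k => i < k)).min' hne ≤ k :=
    fun k hk => Finset.min'_le _ k hk
  generalize (T.filter (fun k => i < k)).min' hne = m at hm hle
  simp only [Finset.mem_filter] at hm hle
  refine ⟨m, fun k => ⟨?_, ?_⟩⟩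
  · rintro ⟨h1, h2, h3, h4⟩
    exact le_antisymm (not_lt.1 (h4 m hm.1 hm.2)) (hle k ⟨h3, h1⟩)
  · rintro rfl
    exact ⟨hm.2, hi, hm.1, fun l hl h1 => not_lt.2 (hle l ⟨hl, h1⟩)⟩

lemma cryEdge_in {n : ℕ} {T : Finset (Fin (n + 1))} {i : Fin (n + 1)}
    (hi : i ∈ T) (hl : 0 ∈ T) (h : i ≠ 0) :
    ∃ j, ∀ k, cryEdge T k i ↔ k = j := by
  have hne : (T.filter (fun k => k < i)).Nonempty :=
    ⟨0, by simp [hl, Fin.pos_iff_ne_zero, h]⟩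
  have hm := Finset.max'_mem _ hne
  have hle : ∀ k ∈ T.filter (fun k => k < i), k ≤ (T.filter (fun k => k < i)).max' hne :=
    fun k hk => Finset.le_max' _ k hk
  generalize (T.filter (fun k => k < i)).max' hne = m at hm hle
  simp only [Finset.mem_filter] at hm hle
  refine ⟨m, fun k => ⟨?_, ?_⟩⟩
  · rintro ⟨h1, h2, h3, h4⟩
    refine le_antisymm (hle k ⟨h2, h1⟩) (not_lt.1 fun h5 => h4 m hm.1 h5 hm.2)
  · rintro rfl
    exact ⟨hm.2, hm.1, hi, fun l hl h1 h2 => absurd h1 (not_lt.2 (hle l ⟨hl, h2⟩))⟩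

lemma cryPath_out {n : ℕ} (t : ℝ) {T : Finset (Fin (n + 1))} (hl : Fin.last n ∈ T)
    (i : Fin (n + 1)) :
    (∑ j, if i < j then cryPath t T i j else 0) =
      if i ∈ T ∧ i ≠ Fin.last n then t else 0 := by
  classical
  have e : ∀ j, (if i < j then cryPath t T i j else 0) = if cryEdge T i j then t else 0 := by
    intro j
    by_cases h : cryEdge T i j
    · simp [cryPath, h, h.1]
    · simp [cryPath, h]
  simp only [e]
  split_ifs with h
  · obtain ⟨m, hm⟩ := cryEdge_out h.1 hl h.2
    simp [hm]
  · refine Finset.sum_eq_zero fun j _ => if_neg ?_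
    rintro ⟨h1, h2, -⟩
    exact h ⟨h2, (lt_of_lt_of_le h1 (Fin.le_last j)).ne⟩

lemma cryPath_in {n : ℕ} (t : ℝ) {T : Finset (Fin (n + 1))} (hl : 0 ∈ T)
    (i : Fin (n + 1)) :
    (∑ j, if j < i then cryPath t T j i else 0) =
      if i ∈ T ∧ i ≠ 0 then t else 0 := by
  classical
  have e : ∀ j, (if j < i then cryPath t T j i else 0) = if cryEdge T j i then t else 0 := by
    intro j
    by_cases h : cryEdge T j i
    · simp [cryPath, h, h.1]
    · simp [cryPath, h]
  simp only [e]
  split_ifs with h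
  · obtain ⟨m, hm⟩ := cryEdge_in h.1 hl h.2
    simp [hm]
  · refine Finset.sum_eq_zero fun j _ => if_neg ?_
    rintro ⟨h1, h2, h3, -⟩
    exact h ⟨h3, (lt_of_le_of_lt (Fin.zero_le j) h1).ne'⟩

lemma cryPath_mem {n : ℕ} (hn : 2 ≤ n) {t : ℝ} (ht : 0 < t) {T : Finset (Fin (n + 1))}
    (h0 : 0 ∈ T) (hl : Fin.last n ∈ T) : cryPath t T ∈ FlowPolytope n (cryN n t) := by
  classical
  refine ⟨?_, ?_, ?_⟩
  · intro i j _
    simp only [cryPath]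
    split_ifs <;> linarith
  · intro i j h
    simp only [cryPath]
    exact if_neg fun h' => h h'.1
  · intro i
    rw [cryPath_out t hl, cryPath_in t h0]
    have e0 : (i : ℕ) = 0 ↔ i = 0 := (Fin.ext_iff (a := i) (b := 0)).symm
    have en : (i : ℕ) = n ↔ i = Fin.last n := (Fin.ext_iff (a := i) (b := Fin.last n)).symm
    have hne : (0 : Fin (n+1)) ≠ Fin.last n := by
      simp [Fin.ext_iff]; omega
    simp only [cryN, e0, en]
    by_cases a : i = 0
    · subst a; simp [h0, hne]
    · by_cases b : i = Fin.last n
      · subst b; simp [hl, hne.symm]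
      · simp [a, b]

/-- a circulation supported on a path vanishes -/
lemma cry_unique {n : ℕ} {t : ℝ} {T : Finset (Fin (n + 1))}
    (h0 : 0 ∈ T) (hl : Fin.last n ∈ T) {N : Fin (n + 1) → ℝ}
    {x y : Fin (n + 1) → Fin (n + 1) → ℝ}
    (hx : x ∈ FlowPolytope n N) (hy : y ∈ FlowPolytope n N)
    (sx : ∀ i j, ¬ cryEdge T i j → x i j = 0) (sy : ∀ i j, ¬ cryEdge T i j → y i j = 0) :
    x = y := by
  have key : ∀ i : Fin (n + 1), ∀ j, x i j = y i j := by
    intro i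
    induction i using WellFoundedLT.induction with
    | ind i ih =>
      intro j
      by_cases hij : cryEdge T i j
      swap
      · rw [sx i j hij, sy i j hij]
      have hnl : i ≠ Fin.last n := (lt_of_lt_of_le hij.1 (Fin.le_last j)).ne
      obtain ⟨m, hm⟩ := cryEdge_out hij.2.1 hl hnl
      obtain rfl := (hm j).1 hij
      have out : ∀ z : Fin (n + 1) → Fin (n + 1) → ℝ, (∀ i j, ¬ cryEdge T i j → z i j = 0) →
          (∑ k, if i < k then z i k else 0) = z i j := by
        intro z hz
        rw [Finset.sum_eq_single j]
        · simp [hij.1]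
        · intro b _ hb
          rw [hz i b (fun h => hb ((hm b).1 h))]; simp
        · simp
      have e1 := hx.2.2 i
      have e2 := hy.2.2 i
      rw [out x sx] at e1
      rw [out y sy] at e2
      have e3 : (∑ k, if k < i then x k i else 0) = ∑ k, if k < i then y k i else 0 := by
        refine Finset.sum_congr rfl fun k _ => ?_
        split_ifs with h
        · exact ih k h i
        · rfl
      linarith
  funext i j
  exact key i j

lemma cryPath_extreme {n : ℕ} (hn : 2 ≤ n) {t : ℝ} (ht : 0 < t) {T : Finset (Fin (n + 1))}
    (h0 : 0 ∈ T) (hl : Fin.last n ∈ T) :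
    cryPath t T ∈ Set.extremePoints ℝ (FlowPolytope n (cryN n t)) := by
  classical
  have hP := cryPath_mem hn ht h0 hl
  rw [mem_extremePoints_iff_left]
  refine ⟨hP, ?_⟩
  rintro x hx y hy ⟨a, b, ha, hb, hab, hxy⟩
  refine cry_unique (t := t) h0 hl hx hP ?_ ?_
  · intro i j hij
    by_cases h : i < j
    swap
    · exact hx.2.1 i j h
    have e : a * x i j + b * y i j = 0 := by
      have := congrFun (congrFun hxy i) j
      simpa [cryPath, hij] using this
    have h1 := hx.1 i j h
    have h2 := hy.1 i j h
    have h3 := mul_nonneg ha.le h1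
    have h4 := mul_nonneg hb.le h2
    have h5 : a * x i j = 0 := by linarith
    exact (mul_eq_zero.1 h5).resolve_left ha.ne'
  · intro i j hij
    simp [cryPath, hij]

lemma cry_find {n : ℕ} {t : ℝ} (ht : 0 < t) {f : Fin (n + 1) → Fin (n + 1) → ℝ}
    (hf : f ∈ FlowPolytope n (cryN n t)) (i : Fin (n + 1)) :
    (i = 0 ∨ i = Fin.last n ∨ ∃ k, k < i ∧ 0 < f k i) →
    ∃ T : Finset (Fin (n + 1)), (∀ k ∈ T, i ≤ k) ∧ i ∈ T ∧ Fin.last n ∈ T ∧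
      ∀ a b, cryEdge T a b → 0 < f a b := by
  induction i using WellFoundedGT.induction with
  | ind i ih =>
    intro h
    by_cases hil : i = Fin.last n
    · subst hil
      refine ⟨{Fin.last n}, by simp, by simp, by simp, ?_⟩
      rintro a b ⟨h1, h2, h3, -⟩
      simp at h2 h3
      subst h2 h3
      simp at h1
    have hin : 0 ≤ ∑ k, if k < i then f k i else 0 := by
      refine Finset.sum_nonneg fun k _ => ?_
      split_ifs with h
      · exact hf.1 k i h
      · exact le_rfl
    have hout : 0 < ∑ k, if i < k then f i k else 0 := by
      have e := hf.2.2 i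
      have en : (i : ℕ) ≠ n := fun h => hil (by simp [Fin.ext_iff, h])
      by_cases hi0 : i = 0
      · have : cryN n t i = t := by simp [cryN, hi0]
        linarith
      · have e0 : (i : ℕ) ≠ 0 := fun h => hi0 (by simp [Fin.ext_iff, h])
        have : cryN n t i = 0 := by simp [cryN, e0, en]
        obtain ⟨k, hk, hk2⟩ := (h.resolve_left hi0).resolve_left hil
        have : 0 < ∑ k, if k < i then f k i else 0 := by
          refine Finset.sum_pos' (fun k _ => ?_) ⟨k, Finset.mem_univ _, by simpa [hk] using hk2⟩
          split_ifs with h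
          · exact hf.1 k i h
          · exact le_rfl
        linarith
    obtain ⟨j, -, hj⟩ := Finset.exists_lt_of_sum_lt (s := Finset.univ) (f := fun _ => (0:ℝ))
      (g := fun k => if i < k then f i k else 0) (by simpa using hout)
    have hij : i < j := by
      by_contra h
      simp [h] at hj
    simp only [hij, if_true] at hj
    obtain ⟨T, h1, h2, h3, h4⟩ := ih j hij (Or.inr (Or.inr ⟨i, hij, hj⟩))
    refine ⟨insert i T, ?_, by simp, by simp [h3], ?_⟩
    · intro k hk
      rcases Finset.mem_insert.1 hk with rfl | hk
      · exact le_rfl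
      · exact hij.le.trans (h1 k hk)
    · rintro a b ⟨q1, q2, q3, q4⟩
      have hb : b ∈ T := by
        rcases Finset.mem_insert.1 q3 with rfl | hk
        · rcases Finset.mem_insert.1 q2 with rfl | hk
          · exact absurd q1 (lt_irrefl _)
          · exact absurd (q1.trans hij) (not_lt.2 (h1 a hk))
        · exact hk
      rcases Finset.mem_insert.1 q2 with rfl | ha
      · have : b = j := le_antisymm (not_lt.1 (q4 j (by simp [h2]) hij)) (h1 b hb)
        rw [this]; exact hj
      · exact h4 a b ⟨q1, ha, hb, fun k hk => q4 k (by simp [hk])⟩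

lemma cry_extreme_path {n : ℕ} (hn : 2 ≤ n) {t : ℝ} (ht : 0 < t)
    {f : Fin (n + 1) → Fin (n + 1) → ℝ}
    (hf : f ∈ Set.extremePoints ℝ (FlowPolytope n (cryN n t))) :
    ∃ T : Finset (Fin (n + 1)), 0 ∈ T ∧ Fin.last n ∈ T ∧ cryPath t T = f := by
  classical
  rw [mem_extremePoints_iff_left] at hf
  obtain ⟨hf, hext⟩ := hf
  obtain ⟨T, -, h0, hl, hT⟩ := cry_find ht hf 0 (Or.inl rfl)
  refine ⟨T, h0, hl, ?_⟩
  have hP := cryPath_mem hn ht h0 hl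
  -- small epsilon
  obtain ⟨m, hm0, hm⟩ : ∃ m : ℝ, 0 < m ∧ ∀ p : Fin (n + 1) × Fin (n + 1),
      0 < f p.1 p.2 → m ≤ f p.1 p.2 := by
    have := Finite.exists_min (fun p : Fin (n + 1) × Fin (n + 1) =>
      if 0 < f p.1 p.2 then f p.1 p.2 else 1)
    obtain ⟨p₀, hp⟩ := this
    refine ⟨_, ?_, fun p hp' => (hp p).trans_eq (if_pos hp')⟩
    split_ifs with h
    · exact h
    · exact one_pos
  set ε : ℝ := min (1 / 2) (m / t) with hε
  have e0 : 0 < ε := lt_min (by norm_num) (by positivity)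
  have e1 : 0 < 1 - ε := by
    have : ε ≤ 1 / 2 := min_le_left _ _
    linarith
  have e2 : ε * t ≤ m := by
    have : ε ≤ m / t := min_le_right _ _
    rwa [le_div_iff₀ ht] at this
  set g : Fin (n + 1) → Fin (n + 1) → ℝ :=
    fun i j => (1 - ε)⁻¹ * (f i j - ε * cryPath t T i j) with hg
  have hgm : g ∈ FlowPolytope n (cryN n t) := by
    refine ⟨?_, ?_, ?_⟩
    · intro i j hij
      refine mul_nonneg (inv_nonneg.2 e1.le) ?_
      by_cases h : cryEdge T i j
      · have := hm (i, j) (hT i j h)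
        simp only [cryPath, h, if_true]
        simp only at this
        linarith
      · simpa [cryPath, h] using hf.1 i j hij
    · intro i j hij
      simp only [hg]
      rw [hf.2.1 i j hij, hP.2.1 i j hij]; simp
    · intro i
      have a1 := hf.2.2 i
      have a2 := hP.2.2 i
      have s1 : (∑ j, if i < j then g i j else 0) = (1 - ε)⁻¹ *
          ((∑ j, if i < j then f i j else 0) - ε * ∑ j, if i < j then cryPath t T i j else 0) := by
        rw [Finset.mul_sum, ← Finset.sum_sub_distrib, Finset.mul_sum]
        refine Finset.sum_congr rfl fun j _ => ?_
        split_ifs <;> simp [hg]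
      have s2 : (∑ j, if j < i then g j i else 0) = (1 - ε)⁻¹ *
          ((∑ j, if j < i then f j i else 0) - ε * ∑ j, if j < i then cryPath t T j i else 0) := by
        rw [Finset.mul_sum, ← Finset.sum_sub_distrib, Finset.mul_sum]
        refine Finset.sum_congr rfl fun j _ => ?_
        split_ifs <;> simp [hg]
      rw [s1, s2, ← mul_sub]
      rw [inv_mul_eq_iff_eq_mul₀ e1.ne']
      linear_combination a1 - ε * a2
  refine hext _ hP g hgm ⟨ε, 1 - ε, e0, e1, by ring, ?_⟩
  funext i j
  simp only [hg, Pi.add_apply, Pi.smul_apply, smul_eq_mul]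
  field_simp
  ring

lemma cryPath_mem_iff {n : ℕ} {t : ℝ} (ht : 0 < t) {T : Finset (Fin (n + 1))}
    (hl : Fin.last n ∈ T) (i : Fin (n + 1)) :
    i ∈ T ↔ i = Fin.last n ∨ ∃ j, cryPath t T i j ≠ 0 := by
  classical
  constructor
  · intro h
    by_cases h' : i = Fin.last n
    · exact Or.inl h'
    · obtain ⟨m, hm⟩ := cryEdge_out h hl h'
      exact Or.inr ⟨m, by simp [cryPath, hm, ht.ne']⟩
  · rintro (rfl | ⟨j, hj⟩)
    · exact hl
    · by_contra h
      exact hj (if_neg fun h' => h h'.2.1)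

lemma cry_extremePoints {n : ℕ} (hn : 2 ≤ n) {t : ℝ} (ht : 0 < t) :
    Set.extremePoints ℝ (FlowPolytope n (cryN n t)) =
      cryPath t '' (↑(Finset.Icc {0, Fin.last n} (Finset.univ : Finset (Fin (n + 1)))) :
        Set (Finset (Fin (n + 1)))) := by
  ext f
  constructor
  · intro hf
    obtain ⟨T, h0, hl, e⟩ := cry_extreme_path hn ht hf
    exact ⟨T, by simp [Finset.insert_subset_iff, h0, hl], e⟩
  · rintro ⟨T, hT, rfl⟩
    simp [Finset.insert_subset_iff] at hT
    exact cryPath_extreme hn ht hT.1 hT.2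

lemma cry_injOn {n : ℕ} {t : ℝ} (ht : 0 < t) :
    Set.InjOn (cryPath t)
      (↑(Finset.Icc {0, Fin.last n} (Finset.univ : Finset (Fin (n + 1)))) :
        Set (Finset (Fin (n + 1)))) := by
  intro T hT U hU h
  simp [Finset.insert_subset_iff] at hT hU
  ext i
  rw [cryPath_mem_iff ht hT.2, cryPath_mem_iff ht hU.2, h]

lemma cry_sum {n : ℕ} (t : ℝ) (i j : Fin (n + 1)) :
    (∑ T ∈ Finset.Icc {0, Fin.last n} (Finset.univ : Finset (Fin (n + 1))), cryPath t T i j) =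
      if i < j then (2 : ℝ) ^ ((n + 1 - (j - i - 1 : ℕ)) -
        ({0, Fin.last n, i, j} : Finset (Fin (n + 1))).card) * t else 0 := by
  classical
  split_ifs with h
  · simp only [cryPath]
    rw [← Finset.sum_filter, Finset.sum_const, nsmul_eq_mul]
    have : (Finset.Icc {0, Fin.last n} (Finset.univ : Finset (Fin (n + 1)))).filter
        (fun T => cryEdge T i j) =
        Finset.Icc {0, Fin.last n, i, j} (Finset.univ \ Finset.Ioo i j) := by
      ext T
      simp only [Finset.mem_filter, Finset.mem_Icc, Finset.le_eq_subset,
        Finset.insert_subset_iff, Finset.singleton_subset_iff, cryEdge, Finset.subset_univ]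
      simp only [Finset.subset_iff, Finset.mem_sdiff, Finset.mem_univ, Finset.mem_Ioo]
      grind
    rw [this, Finset.card_Icc_finset, Finset.card_sdiff_of_subset (Finset.subset_univ _)]
    · simp
    · intro k hk
      simp only [Finset.mem_insert, Finset.mem_singleton] at hk
      simp only [Finset.mem_sdiff, Finset.mem_univ, Finset.mem_Ioo, true_and]
      have := Fin.zero_le i
      have := Fin.le_last j
      rintro ⟨a, b⟩
      rcases hk with rfl | rfl | rfl | rfl
      · exact absurd a (not_lt.2 (Fin.zero_le _))
      · exact absurd b (not_lt.2 (Fin.le_last _))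
      · exact lt_irrefl _ a
      · exact lt_irrefl _ b
  · refine Finset.sum_eq_zero fun T _ => if_neg fun h' => h h'.1

/-- **Proposition (average of the vertices of the CRY polytope `F_n(t,0,…,0,−t)`).**
The set of extreme points has exactly `2^{n−1}` elements and its average is the
explicit flow given by `f_{0,n} = t·2^{−(n−1)}`, `f_{0,j} = t·2^{−j}` for
`1 ≤ j ≤ n−1`, `f_{i,n} = t·2^{−(n−i)}` for `1 ≤ i ≤ n−1` and
`f_{i,j} = t·2^{−(j−i+1)}` for `1 ≤ i < j ≤ n−1`. -/
theorem average_extremePoints_CRY (n : ℕ) (hn : 2 ≤ n) (t : ℝ) (ht : 0 < t) :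
    (Set.extremePoints ℝ
        (FlowPolytope n fun i =>
          if (i : ℕ) = 0 then t else if (i : ℕ) = n then -t else 0)).ncard =
      2 ^ (n - 1) ∧
    ((2 ^ (n - 1) : ℝ)⁻¹ •
        ∑ᶠ v ∈ Set.extremePoints ℝ
          (FlowPolytope n fun i =>
            if (i : ℕ) = 0 then t else if (i : ℕ) = n then -t else 0), v) =
      fun (i j : Fin (n + 1)) =>
        if (i : ℕ) = 0 ∧ (j : ℕ) = n then t * (2 : ℝ) ^ (-((n : ℤ) - 1))
        else if (i : ℕ) = 0 ∧ 1 ≤ (j : ℕ) ∧ (j : ℕ) ≤ n - 1 then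
          t * (2 : ℝ) ^ (-((j : ℕ) : ℤ))
        else if (j : ℕ) = n ∧ 1 ≤ (i : ℕ) ∧ (i : ℕ) ≤ n - 1 then
          t * (2 : ℝ) ^ (-((n : ℤ) - ((i : ℕ) : ℤ)))
        else if 1 ≤ (i : ℕ) ∧ (i : ℕ) < (j : ℕ) ∧ (j : ℕ) ≤ n - 1 then
          t * (2 : ℝ) ^ (-(((j : ℕ) : ℤ) - ((i : ℕ) : ℤ) + 1))
        else 0 := by
  change (Set.extremePoints ℝ (FlowPolytope n (cryN n t))).ncard = _ ∧
    ((2 ^ (n - 1) : ℝ)⁻¹ • ∑ᶠ v ∈ Set.extremePoints ℝ (FlowPolytope n (cryN n t)), v) = _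
  have hne : (0 : Fin (n+1)) ≠ Fin.last n := by
    simp [Fin.ext_iff]; omega
  rw [cry_extremePoints hn ht]
  constructor
  · rw [Set.ncard_image_of_injOn (cry_injOn ht), Set.ncard_coe_finset,
      Finset.card_Icc_finset (Finset.subset_univ _), Finset.card_pair hne]
    simp
  · rw [finsum_mem_image (cry_injOn ht), finsum_mem_coe_finset]
    funext i j
    simp only [Pi.smul_apply, Finset.sum_apply, smul_eq_mul]
    rw [cry_sum]
    have hi := i.isLt
    have hj := j.isLt
    have pw : ∀ (a : ℕ) (b : ℤ), (a : ℤ) - ((n - 1 : ℕ) : ℤ) = b →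
        ((2 : ℝ) ^ (n - 1))⁻¹ * (2 ^ a * t) = t * 2 ^ b := by
      intro a b hab
      rw [← hab, zpow_sub₀ two_ne_zero, zpow_natCast, zpow_natCast]
      field_simp
    by_cases h : i < j
    · rw [if_pos h]
      have h' : (i : ℕ) < j := h
      by_cases a : (i : ℕ) = 0 <;> by_cases b : (j : ℕ) = n
      · have c : ({0, Fin.last n, i, j} : Finset (Fin (n + 1))).card = 2 := by
          obtain rfl : i = 0 := Fin.ext a
          obtain rfl : j = Fin.last n := Fin.ext b
          rw [← Finset.card_pair hne]; congr 1; ext; simp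
        rw [c, if_pos ⟨a, b⟩]
        exact pw _ _ (by omega)
      · have c : ({0, Fin.last n, i, j} : Finset (Fin (n + 1))).card = 3 := by
          obtain rfl : i = 0 := Fin.ext a
          rw [Finset.card_eq_three]
          refine ⟨0, Fin.last n, j, hne, h.ne, fun e => b (by simp [← e]), ?_⟩
          ext; simp; try tauto
        rw [c, if_neg (by omega), if_pos (by omega)]
        exact pw _ _ (by omega)
      · have c : ({0, Fin.last n, i, j} : Finset (Fin (n + 1))).card = 3 := by
          obtain rfl : j = Fin.last n := Fin.ext b
          rw [Finset.card_eq_three]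
          refine ⟨0, Fin.last n, i, hne, fun e => a (by simp [← e]), h.ne', ?_⟩
          ext; simp; tauto
        rw [c, if_neg (by omega), if_neg (by omega), if_pos (by omega)]
        exact pw _ _ (by omega)
      · have c : ({0, Fin.last n, i, j} : Finset (Fin (n + 1))).card = 4 := by
          rw [Finset.card_insert_of_notMem, Finset.card_insert_of_notMem,
            Finset.card_pair h.ne]
          · simp [Fin.ext_iff]; omega
          · simp [Fin.ext_iff]; omega
        rw [c, if_neg (by omega), if_neg (by omega), if_neg (by omega), if_pos (by omega)]
        exact pw _ _ (by omega)
    · rw [if_neg h]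
      have h' : ¬ (i : ℕ) < j := h
      rw [if_neg (by omega), if_neg (by omega), if_neg (by omega), if_neg (by omega), mul_zero]
end

section
/- Let n ≥ 1 and N = (N_0, …, N_{n−1}, −∑_{i=0}^{n−1} N_i) where all N_i are positive integers. Set s_k = ∑_{j=0}^{k} N_j and c_k = N_{n−k}/(k+1) + s_{n−k}/(k(k+1)) for 1 ≤ k ≤ n. Then the set of extreme points of the flow polytope F_n(N) has exactly n! elements, and its average (1/n!) · ∑_{v extreme} v is the flow f with f_{ij} = c_{n−i} for all 0 ≤ i < j ≤ n. -/
open Finset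

/-- allowed targets of a vertex -/
def tgt (n : ℕ) (i : Fin (n + 1)) : Finset (Fin (n + 1)) :=
  if i < Fin.last n then Finset.Ioi i else {i}

/-- throughput of the vertex `i` -/
noncomputable def thr {n : ℕ} (N : Fin (n + 1) → ℝ) (g : Fin (n + 1) → Fin (n + 1))
    (i : Fin (n + 1)) : ℝ :=
  N i + ∑ k : Fin (n + 1), if h : k < i then (if g k = i then thr N g k else 0) else 0
termination_by i

/-- the flow along `g` -/
noncomputable def gflow {n : ℕ} (N : Fin (n + 1) → ℝ) (g : Fin (n + 1) → Fin (n + 1)) :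
    Fin (n + 1) → Fin (n + 1) → ℝ :=
  fun i j => if i < j ∧ g i = j then thr N g i else 0

lemma thr_eq {n : ℕ} (N : Fin (n + 1) → ℝ) (g : Fin (n + 1) → Fin (n + 1)) (i : Fin (n + 1)) :
    thr N g i = N i + ∑ k : Fin (n + 1), if k < i then gflow N g k i else 0 := by
  rw [thr]
  congr 1
  apply Finset.sum_congr rfl
  intro k _
  by_cases h : k < i <;> simp [h, gflow]

lemma thr_congr {n : ℕ} (N : Fin (n + 1) → ℝ) (g g' : Fin (n + 1) → Fin (n + 1))
    (i : Fin (n + 1)) (H : ∀ k < i, g k = g' k) : thr N g i = thr N g' i := by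
  induction i using WellFoundedLT.induction with
  | ind i ih =>
    rw [thr_eq, thr_eq]
    congr 1
    apply Finset.sum_congr rfl
    intro k _
    by_cases h : k < i
    · simp only [h, if_true, gflow, true_and, H k h]
      rw [ih k h (fun l hl => H l (hl.trans h))]
    · simp [h]

lemma thr_pos {n : ℕ} (N : Fin (n + 1) → ℝ) (hN : ∀ i, i < Fin.last n → 0 < N i)
    (g : Fin (n + 1) → Fin (n + 1)) (i : Fin (n + 1)) (hi : i < Fin.last n) : 0 < thr N g i := by
  induction i using WellFoundedLT.induction with
  | ind i ih =>
    rw [thr_eq]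
    apply add_pos_of_pos_of_nonneg (hN i hi)
    apply Finset.sum_nonneg
    intro k _
    split_ifs with h
    · unfold gflow
      split_ifs
      · exact (ih k h (h.trans hi)).le
      · exact le_rfl
    · exact le_rfl

lemma lt_of_tgt {n : ℕ} {g : Fin (n + 1) → Fin (n + 1)}
    (hg : g ∈ Fintype.piFinset (tgt n)) {i : Fin (n + 1)} (hi : i < Fin.last n) : i < g i := by
  have := Fintype.mem_piFinset.1 hg i
  simpa [tgt, hi] using this

lemma gflow_mem {n : ℕ} (N : Fin (n + 1) → ℝ) (hN : ∀ i, i < Fin.last n → 0 < N i)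
    (hs : ∑ i, N i = 0) (g : Fin (n + 1) → Fin (n + 1)) (hg : g ∈ Fintype.piFinset (tgt n)) :
    gflow N g ∈ FlowPolytope n N := by
  refine ⟨?_, ?_, ?_⟩
  · intro i j hij
    unfold gflow
    split_ifs
    · exact (thr_pos N hN g i (hij.trans_le (Fin.le_last j))).le
    · exact le_rfl
  · intro i j hij
    simp [gflow, hij]
  · have key : ∀ i : Fin (n + 1), i < Fin.last n →
      (∑ j : Fin (n + 1), if i < j then gflow N g i j else 0) -
        (∑ k : Fin (n + 1), if k < i then gflow N g k i else 0) = N i := by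
      intro i hi
      have h1 : (∑ j : Fin (n + 1), if i < j then gflow N g i j else 0) = thr N g i := by
        rw [Finset.sum_eq_single (g i)]
        · simp [gflow, lt_of_tgt hg hi]
        · intro j _ hj
          simp [gflow, hj.symm]
        · simp
      rw [h1, thr_eq]
      ring
    intro i
    rcases (Fin.le_last i).lt_or_eq with h | h
    · exact key i h
    · subst h
      have tot : ∑ i : Fin (n + 1), ((∑ j : Fin (n + 1), if i < j then gflow N g i j else 0) -
        (∑ k : Fin (n + 1), if k < i then gflow N g k i else 0)) = ∑ i, N i := by
        rw [Finset.sum_sub_distrib, Finset.sum_comm, sub_self, hs]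
      rw [Fin.sum_univ_castSucc, Fin.sum_univ_castSucc (f := N)] at tot
      rw [Finset.sum_congr rfl (fun i _ => key i.castSucc (Fin.castSucc_lt_last i))] at tot
      exact add_left_cancel tot

lemma flow_unique {n : ℕ} (N : Fin (n + 1) → ℝ) (g : Fin (n + 1) → Fin (n + 1))
    (x y : Fin (n + 1) → Fin (n + 1) → ℝ) (hx : x ∈ FlowPolytope n N) (hy : y ∈ FlowPolytope n N)
    (hxg : ∀ i j, g i ≠ j → x i j = 0) (hyg : ∀ i j, g i ≠ j → y i j = 0) : x = y := by
  have out : ∀ z ∈ FlowPolytope n N, (∀ i j, g i ≠ j → z i j = 0) → ∀ i,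
      z i (g i) = N i + (∑ k : Fin (n + 1), if k < i then z k i else 0) := by
    intro z hz hzg i
    rw [← hz.2.2 i, Finset.sum_eq_single (g i)]
    · by_cases h : i < g i
      · simp [h]
      · simp [h, hz.2.1 i (g i) h]
    · intro j _ hj
      simp [hzg i j hj.symm]
    · simp
  funext i
  induction i using WellFoundedLT.induction with
  | ind i ih =>
    funext j
    by_cases h : g i = j
    · subst h
      rw [out x hx hxg, out y hy hyg]
      congr 1
      apply Finset.sum_congr rfl
      intro k _
      by_cases hk : k < i
      · rw [ih k hk]
      · simp [hk]
    · rw [hxg i j h, hyg i j h]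

lemma affine_mem {n : ℕ} (N : Fin (n + 1) → ℝ) (x y : Fin (n + 1) → Fin (n + 1) → ℝ)
    (hx : x ∈ FlowPolytope n N) (hy : y ∈ FlowPolytope n N) (a b : ℝ) (hab : a + b = 1)
    (hnn : ∀ i j, 0 ≤ a * x i j + b * y i j) : a • x + b • y ∈ FlowPolytope n N := by
  refine ⟨fun i j _ => hnn i j, ?_, ?_⟩
  · intro i j hij
    simp [hx.2.1 i j hij, hy.2.1 i j hij]
  · intro i
    have h1 := hx.2.2 i
    have h2 := hy.2.2 i
    have e : ∀ (p : Prop) [Decidable p] (u v : ℝ), (if p then a * u + b * v else 0)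
        = a * (if p then u else 0) + b * (if p then v else 0) := by
      intro p _ u v
      split_ifs <;> simp
    simp only [Pi.add_apply, Pi.smul_apply, smul_eq_mul, e, Finset.sum_add_distrib,
      ← Finset.mul_sum]
    calc _ = a * N i + b * N i := by linear_combination a * h1 + b * h2
      _ = N i := by rw [← add_mul, hab, one_mul]

lemma flow_nonneg {n : ℕ} {N : Fin (n + 1) → ℝ} {x : Fin (n + 1) → Fin (n + 1) → ℝ}
    (hx : x ∈ FlowPolytope n N) (i j) : 0 ≤ x i j := by
  by_cases h : i < j
  · exact hx.1 i j h
  · exact (hx.2.1 i j h).ge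

lemma gflow_extreme {n : ℕ} (N : Fin (n + 1) → ℝ) (hN : ∀ i, i < Fin.last n → 0 < N i)
    (hs : ∑ i, N i = 0) (g : Fin (n + 1) → Fin (n + 1)) (hg : g ∈ Fintype.piFinset (tgt n)) :
    gflow N g ∈ Set.extremePoints ℝ (FlowPolytope n N) := by
  rw [mem_extremePoints]
  refine ⟨gflow_mem N hN hs g hg, ?_⟩
  rintro x hx y hy ⟨a, b, ha, hb, hab, h⟩
  have hz : ∀ i j, g i ≠ j → x i j = 0 ∧ y i j = 0 := by
    intro i j hij
    have h1 := congrFun (congrFun h i) j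
    simp only [Pi.add_apply, Pi.smul_apply, smul_eq_mul, gflow, hij, and_false, if_false] at h1
    have h2 := flow_nonneg hx i j
    have h3 := flow_nonneg hy i j
    have h4 := mul_nonneg ha.le h2
    have h5 := mul_nonneg hb.le h3
    have h6 : a * x i j = 0 := by linarith
    have h7 : b * y i j = 0 := by linarith
    exact ⟨(mul_eq_zero.1 h6).resolve_left ha.ne', (mul_eq_zero.1 h7).resolve_left hb.ne'⟩
  have hgz : ∀ i j, g i ≠ j → gflow N g i j = 0 := by
    intro i j hij
    simp [gflow, hij]
  have hm := gflow_mem N hN hs g hg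
  exact ⟨flow_unique N g _ _ hx hm (fun i j h => (hz i j h).1) hgz,
    flow_unique N g _ _ hy hm (fun i j h => (hz i j h).2) hgz⟩

lemma extreme_gflow {n : ℕ} (N : Fin (n + 1) → ℝ) (hN : ∀ i, i < Fin.last n → 0 < N i)
    (hs : ∑ i, N i = 0) (f : Fin (n + 1) → Fin (n + 1) → ℝ)
    (hf : f ∈ Set.extremePoints ℝ (FlowPolytope n N)) :
    ∃ g ∈ Fintype.piFinset (tgt n), gflow N g = f := by
  rw [mem_extremePoints] at hf
  obtain ⟨hm, hext⟩ := hf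
  have ex : ∀ i, ∃ j ∈ tgt n i, i < j → 0 < f i j := by
    intro i
    by_cases hi : i < Fin.last n
    · have h1 := hm.2.2 i
      have h2 : 0 ≤ (∑ k : Fin (n + 1), if k < i then f k i else 0) := by
        apply Finset.sum_nonneg
        intro k _
        split_ifs
        · exact flow_nonneg hm _ _
        · exact le_rfl
      have h3 : 0 < (∑ j : Fin (n + 1), if i < j then f i j else 0) := by
        have := hN i hi
        linarith
      obtain ⟨j, -, hj⟩ := Finset.exists_lt_of_sum_lt (s := Finset.univ) (f := fun _ => (0:ℝ))
        (by simpa using h3)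
      split_ifs at hj with hij
      · exact ⟨j, by simpa [tgt, hi] using hij, fun _ => hj⟩
      · exact absurd hj (lt_irrefl _)
    · exact ⟨i, by simp [tgt, hi], fun h => absurd h (lt_irrefl _)⟩
  choose g hg hgp using ex
  have hg' : g ∈ Fintype.piFinset (tgt n) := Fintype.mem_piFinset.2 hg
  refine ⟨g, hg', ?_⟩
  have hv := gflow_mem N hN hs g hg'
  obtain ⟨ε, hε0, hε1, hε⟩ : ∃ ε : ℝ, 0 < ε ∧ ε < 1 ∧ ∀ i j, ε * gflow N g i j ≤ f i j := by
    have : ∀ᶠ ε in nhdsWithin (0:ℝ) (Set.Ioi 0), ∀ i j, ε * gflow N g i j ≤ f i j := by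
      rw [Filter.eventually_all]
      intro i
      rw [Filter.eventually_all]
      intro j
      by_cases hij : i < j ∧ g i = j
      · have hp : 0 < f i j := by
          have := hgp i (by rw [hij.2]; exact hij.1)
          rwa [hij.2] at this
        have ht : Filter.Tendsto (fun ε : ℝ => ε * gflow N g i j) (nhdsWithin (0:ℝ) (Set.Ioi 0))
            (nhds 0) := by
          have : Continuous (fun ε : ℝ => ε * gflow N g i j) := by fun_prop
          have := this.tendsto 0
          rw [zero_mul] at this
          exact this.mono_left nhdsWithin_le_nhds
        filter_upwards [ht.eventually (gt_mem_nhds hp)] with ε h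
        exact h.le
      · filter_upwards with ε
        simp only [gflow, hij, if_false, mul_zero]
        exact flow_nonneg hm i j
    obtain ⟨ε, h1, h2⟩ := (this.and (Ioo_mem_nhdsGT (show (0:ℝ) < 1 by norm_num))).exists
    exact ⟨ε, h2.1, h2.2, h1⟩
  have h1ε : 0 < 1 - ε := by linarith
  have hw := affine_mem N f (gflow N g) hm hv ((1 - ε)⁻¹) (-((1 - ε)⁻¹ * ε)) (by field_simp; ring)
    (by
      intro i j
      have := mul_nonneg (inv_nonneg.2 h1ε.le) (sub_nonneg.2 (hε i j))
      linarith)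
  refine (hext _ hv _ hw ⟨ε, 1 - ε, hε0, h1ε, by ring, ?_⟩).1
  funext i j
  simp only [Pi.add_apply, Pi.smul_apply, smul_eq_mul]
  field_simp
  ring

lemma gflow_inj {n : ℕ} (N : Fin (n + 1) → ℝ) (hN : ∀ i, i < Fin.last n → 0 < N i) :
    Set.InjOn (gflow N) (Fintype.piFinset (tgt n) : Set (Fin (n + 1) → Fin (n + 1))) := by
  intro g hg g' hg' h
  simp only [Finset.mem_coe] at hg hg'
  funext i
  by_cases hi : i < Fin.last n
  · have h1 := congrFun (congrFun h i) (g i)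
    have h2 := thr_pos N hN g i hi
    by_contra hne
    simp only [gflow, lt_of_tgt hg hi, true_and, if_true, Ne.symm hne, if_false] at h1
    linarith
  · have a := Fintype.mem_piFinset.1 hg i
    have b := Fintype.mem_piFinset.1 hg' i
    simp only [tgt, hi, if_false, Finset.mem_singleton] at a b
    rw [a, b]

lemma card_tgt (n : ℕ) : (Fintype.piFinset (tgt n)).card = n.factorial := by
  rw [Fintype.card_piFinset, Fin.prod_univ_castSucc]
  have : ∀ i : Fin n, (tgt n i.castSucc).card = n - i := by
    intro i
    simp [tgt, Fin.castSucc_lt_last]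
  simp only [this]
  rw [Fin.prod_univ_eq_prod_range (fun i => n - i) n]
  simp only [tgt, lt_irrefl, if_false, Finset.card_singleton, mul_one]
  rw [← Finset.prod_range_reflect, ← Finset.prod_range_add_one_eq_factorial]
  apply Finset.prod_congr rfl
  intro j hj
  have := Finset.mem_range.1 hj
  omega

lemma sum_symm {n : ℕ} (N : Fin (n + 1) → ℝ) (i j j' : Fin (n + 1)) (hj : i < j) (hj' : i < j') :
    ∑ g ∈ Fintype.piFinset (tgt n), gflow N g i j =
      ∑ g ∈ Fintype.piFinset (tgt n), gflow N g i j' := by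
  have hi : i < Fin.last n := hj.trans_le (Fin.le_last j)
  have mem : ∀ g ∈ Fintype.piFinset (tgt n),
      Function.update g i (Equiv.swap j j' (g i)) ∈ Fintype.piFinset (tgt n) := by
    intro g hg
    rw [Fintype.mem_piFinset] at hg ⊢
    intro k
    by_cases hk : k = i
    · subst hk
      have := hg k
      simp only [tgt, hi, if_true, Finset.mem_Ioi, Function.update_self] at this ⊢
      rw [Equiv.swap_apply_def]
      split_ifs <;> assumption
    · rw [Function.update_of_ne hk]
      exact hg k
  have inv : ∀ g : Fin (n + 1) → Fin (n + 1), Function.update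
      (Function.update g i (Equiv.swap j j' (g i))) i
      (Equiv.swap j j' (Function.update g i (Equiv.swap j j' (g i)) i)) = g := by
    intro g
    simp
  refine Finset.sum_nbij' (fun g => Function.update g i (Equiv.swap j j' (g i)))
    (fun g => Function.update g i (Equiv.swap j j' (g i))) mem mem (fun g _ => inv g)
    (fun g _ => inv g) ?_
  intro g _
  have h1 : thr N (Function.update g i (Equiv.swap j j' (g i))) i = thr N g i := by
    apply thr_congr
    intro k hk
    rw [Function.update_of_ne hk.ne]
  simp only [gflow, hj, hj', true_and, h1, Function.update_self]
  have : (Equiv.swap j j' (g i) = j') ↔ g i = j := by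
    rw [Equiv.apply_eq_iff_eq_symm_apply]
    simp
  simp only [this]

lemma conv_sum (n : ℕ) (F : ℕ → ℝ) (i : Fin (n + 1)) :
    (∑ k : Fin (n + 1), if k < i then F k else 0) = ∑ k ∈ Finset.range i, F k := by
  simp only [Fin.lt_def]
  rw [Fin.sum_univ_eq_sum_range (fun k => if k < (i : ℕ) then F k else 0) (n + 1),
    ← Finset.sum_filter]
  apply Finset.sum_congr _ (fun _ _ => rfl)
  ext k
  simp only [Finset.mem_filter, Finset.mem_range]
  omega

lemma sum_C (n : ℕ) (M : ℕ → ℝ) (i : ℕ) (hi : i ≤ n) :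
    ∑ k ∈ Finset.range i, (M k / ((n:ℝ) - k + 1) +
      (∑ l ∈ Finset.range (k + 1), M l) / (((n:ℝ) - k) * ((n:ℝ) - k + 1))) =
    (∑ l ∈ Finset.range i, M l) / ((n : ℝ) - i + 1) := by
  induction i with
  | zero => simp
  | succ i ih =>
    rw [Finset.sum_range_succ, ih (by omega), Finset.sum_range_succ]
    have h : (0:ℝ) < (n:ℝ) - i := by
      have : ((i + 1 : ℕ) : ℝ) ≤ n := by exact_mod_cast hi
      push_cast at this
      linarith
    have h2 : (0:ℝ) < (n:ℝ) - i + 1 := by linarith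
    have h3 : (n:ℝ) - ((i + 1 : ℕ) : ℝ) + 1 = n - i := by push_cast; ring
    rw [h3]
    field_simp
    ring

lemma avg_flow {n : ℕ} (N : Fin (n + 1) → ℝ) (hN : ∀ i, i < Fin.last n → 0 < N i)
    (hs : ∑ i, N i = 0) (M : ℕ → ℝ) (hM : ∀ i : Fin (n + 1), M i = N i)
    (i j : Fin (n + 1)) (hij : i < j) :
    ∑ g ∈ Fintype.piFinset (tgt n), gflow N g i j = n.factorial *
      (M i / ((n:ℝ) - i + 1) +
      (∑ l ∈ Finset.range (i + 1), M l) / (((n:ℝ) - i) * ((n:ℝ) - i + 1))) := by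
  induction i using WellFoundedLT.induction generalizing j with
  | ind i ih =>
    have hi : i < Fin.last n := hij.trans_le (Fin.le_last j)
    have eqn : ∑ g ∈ Fintype.piFinset (tgt n),
        ((∑ j : Fin (n + 1), if i < j then gflow N g i j else 0) -
        (∑ k : Fin (n + 1), if k < i then gflow N g k i else 0)) = n.factorial * N i := by
      rw [Finset.sum_congr rfl (fun g hg => (gflow_mem N hN hs g hg).2.2 i)]
      rw [Finset.sum_const, card_tgt, nsmul_eq_mul]
    rw [Finset.sum_sub_distrib, Finset.sum_comm,
      Finset.sum_comm (s := Fintype.piFinset (tgt n))] at eqn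
    have h1 : ∑ j' : Fin (n + 1), ∑ g ∈ Fintype.piFinset (tgt n),
        (if i < j' then gflow N g i j' else 0) =
        ((n:ℝ) - i) * ∑ g ∈ Fintype.piFinset (tgt n), gflow N g i j := by
      have : ∀ j' : Fin (n + 1), ∑ g ∈ Fintype.piFinset (tgt n),
        (if i < j' then gflow N g i j' else 0) = if i < j' then
          ∑ g ∈ Fintype.piFinset (tgt n), gflow N g i j else 0 := by
        intro j'
        split_ifs with h
        · exact sum_symm N i j' j h hij
        · simp
      simp only [this]
      rw [← Finset.sum_filter, Finset.sum_const, nsmul_eq_mul]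
      congr 1
      have h4 : (Finset.univ.filter (fun j' => i < j')) = Finset.Ioi i := by ext; simp
      rw [h4, Fin.card_Ioi]
      have : (i:ℕ) ≤ n := by omega
      rw [← Nat.cast_sub this]
      congr 1
    have h2 : ∑ k : Fin (n + 1), ∑ g ∈ Fintype.piFinset (tgt n),
        (if k < i then gflow N g k i else 0) = n.factorial *
          ((∑ l ∈ Finset.range i, M l) / ((n : ℝ) - i + 1)) := by
      rw [← sum_C n M i (by omega), ← conv_sum, Finset.mul_sum]
      apply Finset.sum_congr rfl
      intro k _
      split_ifs with h
      · rw [ih k h i h]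
      · simp
    rw [h1, h2] at eqn
    have h : (0:ℝ) < (n:ℝ) - i := by
      have : (i:ℕ) < n := hi
      have : ((i:ℕ):ℝ) < n := by exact_mod_cast this
      linarith
    have h' : (0:ℝ) < (n:ℝ) - i + 1 := by linarith
    apply mul_left_cancel₀ h.ne'
    rw [sub_eq_iff_eq_add.1 eqn, ← hM, Finset.sum_range_succ]
    field_simp
    ring

/-- **Proposition (average of the vertices of the generalized Tesler polytope).**
For positive netflow `(N_0,…,N_{n−1},−∑ N_i)`, with `s_k = ∑_{j=0}^k N_j` and
`c_k = N_{n−k}/(k+1) + s_{n−k}/(k(k+1))` for `1 ≤ k ≤ n`, the flow polytope has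
exactly `n!` extreme points and their average is the flow with `f_{ij} = c_{n−i}`
for all `0 ≤ i < j ≤ n`. -/
theorem average_extremePoints_Tesler (n : ℕ) (hn : 1 ≤ n) (N : Fin n → ℕ)
    (hpos : ∀ i, 0 < N i) :
    (Set.extremePoints ℝ
        (FlowPolytope n fun i => ((extend n fun i => (N i : ℤ)) i : ℝ))).ncard =
      Nat.factorial n ∧
    ((Nat.factorial n : ℝ)⁻¹ •
        ∑ᶠ v ∈ Set.extremePoints ℝ
          (FlowPolytope n fun i => ((extend n fun i => (N i : ℤ)) i : ℝ)), v) =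
      fun (i j : Fin (n + 1)) =>
        if i < j then
          (fun k : ℕ =>
            (∑ m : Fin (n + 1), if (m : ℕ) = n - k then
              ((extend n fun i => (N i : ℤ)) m : ℝ) else 0) / ((k : ℝ) + 1) +
            ((sPartial n (extend n fun i => (N i : ℤ)) (n - k) : ℤ) : ℝ) /
              ((k : ℝ) * ((k : ℝ) + 1))) (n - (i : ℕ))
        else 0 := by
  set R : Fin (n + 1) → ℝ := fun i => ((extend n fun i => (N i : ℤ)) i : ℝ) with hR
  have hN : ∀ i, i < Fin.last n → 0 < R i := by
    intro i hi
    obtain ⟨k, rfl⟩ := Fin.exists_castSucc_eq.2 hi.ne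
    simp [hR, extend, hpos k]
  have hs : ∑ i, R i = 0 := by
    rw [Fin.sum_univ_castSucc]
    simp [hR, extend]
  have hE : Set.extremePoints ℝ (FlowPolytope n R) =
      ((Fintype.piFinset (tgt n)).image (gflow R) : Finset _) := by
    ext f
    rw [Finset.mem_coe, Finset.mem_image]
    constructor
    · exact extreme_gflow R hN hs f
    · rintro ⟨g, hg, rfl⟩
      exact gflow_extreme R hN hs g hg
  rw [hE]
  constructor
  · rw [Set.ncard_coe_finset, Finset.card_image_of_injOn (gflow_inj R hN), card_tgt]
  · rw [finsum_mem_coe_finset, Finset.sum_image (gflow_inj R hN)]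
    funext i j
    simp only [Pi.smul_apply, Finset.sum_apply, smul_eq_mul]
    by_cases hij : i < j
    · have hi : (i : ℕ) < n := lt_of_lt_of_le hij (Fin.le_last j)
      let M : ℕ → ℝ := fun m => if h : m < n + 1 then R ⟨m, h⟩ else 0
      have hM : ∀ i : Fin (n + 1), M i = R i := by
        intro i
        exact dif_pos i.isLt
      rw [avg_flow R hN hs M hM i j hij, if_pos hij, inv_mul_cancel_left₀ (by positivity)]
      have e1 : n - (n - (i:ℕ)) = i := by omega
      have e2 : ((n - (i:ℕ) : ℕ) : ℝ) = (n:ℝ) - i := Nat.cast_sub hi.le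
      have e3 : (∑ m : Fin (n + 1), if (m : ℕ) = (i:ℕ) then R m else 0) = M i := by
        rw [hM]
        simp [Fin.val_inj]
      have e4 : ((sPartial n (extend n fun i => (N i : ℤ)) (i:ℕ) : ℤ) : ℝ) =
          ∑ l ∈ Finset.range (i + 1), M l := by
        have := conv_sum n M ⟨i + 1, by omega⟩
        simp only at this
        rw [← this, sPartial]
        push_cast
        apply Finset.sum_congr rfl
        intro k _
        simp only [Fin.lt_def, Nat.lt_succ_iff, hM]
        rfl
      simp only [e1, e2, e4]
      rw [← e3]
    · rw [if_neg hij]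
      simp [gflow, hij]
end

section
/- Let n ≥ 1 and N = (N_0, …, N_n) ∈ ℤ^{n+1} with N_0 + ⋯ + N_n = 0. Write s_k = ∑_{j=0}^{k} N_j and c_k = N_{n−k}/(k+1) + s_{n−k}/(k(k+1)) for 1 ≤ k ≤ n. If s_k ≥ max{0, −(n−k)·N_k} for all 0 ≤ k ≤ n−1, then K_n(N) ≥ (1/n²) · ∏_{k=0}^{n−1} s_k^{s_k}/(1+s_k)^{1+s_k} · ∏_{k=1}^{n} ((c_k+1)^{c_k+1}/c_k^{c_k})^{k}, with the convention 0^0 = 1. -/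
open Finset

/-- `c_k = N_{n−k}/(k+1) + s_{n−k}/(k(k+1))`. -/
noncomputable def cAvg (n : ℕ) (N : Fin (n + 1) → ℤ) (k : ℕ) : ℝ :=
  (∑ m : Fin (n + 1), if (m : ℕ) = n - k then (N m : ℝ) else 0) / ((k : ℝ) + 1) +
  ((sPartial n N (n - k) : ℤ) : ℝ) / ((k : ℝ) * ((k : ℝ) + 1))


/-- The polynomial `∏_{i=1}^{j} (1 + x/i)`. -/
noncomputable def kpp (j : ℕ) (x : ℝ) : ℝ := ∏ i ∈ Finset.range j, (1 + x / ((i : ℝ) + 1))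

theorem kpp_succ (j : ℕ) (x : ℝ) : kpp (j + 1) x = kpp j x * (1 + x / ((j : ℝ) + 1)) := by
  unfold kpp; rw [Finset.prod_range_succ]

theorem kpp_nonneg (j : ℕ) (x : ℝ) (hx : -1 ≤ x) : 0 ≤ kpp j x := by
  unfold kpp
  apply Finset.prod_nonneg
  intro i _
  have hi : (0 : ℝ) ≤ i := Nat.cast_nonneg i
  have : 1 + x / ((i : ℝ) + 1) = (i + 1 + x) / (i + 1) := by field_simp
  rw [this]
  apply div_nonneg <;> linarith

theorem kpp_neg_one (j : ℕ) : kpp (j + 1) (-1) = 0 := by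
  unfold kpp; rw [Finset.prod_range_succ']; simp

/-- tangent line bound -/
theorem kpp_tangent (j : ℕ) (d : ℝ) (hd : 0 ≤ d) :
    ∃ a : ℝ, 0 ≤ a ∧ ∀ x : ℝ, -1 ≤ x → kpp (j + 1) d + a * (x - d) ≤ kpp (j + 1) x := by
  induction j with
  | zero => exact ⟨1, zero_le_one, fun x _ => by simp [kpp]⟩
  | succ j ih =>
    obtain ⟨a, ha, h⟩ := ih
    have hp := kpp_nonneg (j + 1) d (by linarith)
    have hj : (0 : ℝ) < ((j + 1 : ℕ) : ℝ) + 1 := by positivity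
    refine ⟨kpp (j + 1) d / (((j + 1 : ℕ) : ℝ) + 1) + a * (1 + d / (((j + 1 : ℕ) : ℝ) + 1)),
      by positivity, fun x hx => ?_⟩
    rw [kpp_succ (j + 1) d, kpp_succ (j + 1) x]
    have h1 := h x hx
    have h2 : 0 ≤ 1 + x / (((j + 1 : ℕ) : ℝ) + 1) := by
      have : 1 + x / (((j + 1 : ℕ) : ℝ) + 1) =
        (((j + 1 : ℕ) : ℝ) + 1 + x) / (((j + 1 : ℕ) : ℝ) + 1) := by field_simp
      rw [this]
      apply div_nonneg _ hj.le
      push_cast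
      have : (0 : ℝ) ≤ j := Nat.cast_nonneg j
      linarith
    refine le_trans ?_ (mul_le_mul_of_nonneg_right h1 h2)
    set q := ((j + 1 : ℕ) : ℝ) + 1
    set P := kpp (j + 1) d
    have : (P + a * (x - d)) * (1 + x / q) -
      (P * (1 + d / q) + (P / q + a * (1 + d / q)) * (x - d)) = a * (x - d) ^ 2 / q := by
      field_simp; ring
    have h3 : 0 ≤ a * (x - d) ^ 2 / q := by positivity
    linarith

theorem entH_mono {x y : ℝ} (hx : 0 ≤ x) (hxy : x ≤ y) : entH x ≤ entH y := by
  have hm : MonotoneOn entH (Set.Ici 0) := by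
    apply monotoneOn_of_deriv_nonneg (convex_Ici 0)
    · have : Continuous entH := by
        unfold entH
        exact (Real.continuous_mul_log.comp (continuous_add_const 1)).sub Real.continuous_mul_log
      exact this.continuousOn
    · intro z hz
      rw [interior_Ici] at hz
      have hz : 0 < z := hz
      unfold entH
      apply DifferentiableAt.differentiableWithinAt
      have : z ≠ 0 := hz.ne'
      have : z + 1 ≠ 0 := by positivity
      fun_prop (disch := assumption)
    · intro z hz
      rw [interior_Ici] at hz
      have hz : 0 < z := hz
      have h1 : HasDerivAt (fun t : ℝ => t * Real.log t) (Real.log z + 1) z :=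
        Real.hasDerivAt_mul_log hz.ne'
      have h2 : HasDerivAt (fun t : ℝ => (t + 1) * Real.log (t + 1)) (Real.log (z + 1) + 1) z :=
        HasDerivAt.comp_add_const z 1 (Real.hasDerivAt_mul_log (by positivity : z + 1 ≠ 0))
      have h3 : HasDerivAt entH (Real.log (z + 1) + 1 - (Real.log z + 1)) z := h2.sub h1
      rw [h3.deriv]
      have := Real.log_le_log hz (by linarith : z ≤ z + 1)
      linarith
  exact hm hx (le_trans hx hxy) hxy

theorem kaux_anti {x y : ℝ} (hx : 0 < x) (hxy : x ≤ y) :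
    (y + 1) * (Real.log (y + 1) - Real.log y) ≤ (x + 1) * (Real.log (x + 1) - Real.log x) := by
  have hder : ∀ z : ℝ, 0 < z → HasDerivAt
      (fun z : ℝ => (z + 1) * Real.log (z + 1) - (z * Real.log z + Real.log z))
      (Real.log (z + 1) + 1 - (Real.log z + 1 + z⁻¹)) z := by
    intro z hz
    have h1 : HasDerivAt (fun t : ℝ => t * Real.log t) (Real.log z + 1) z :=
      Real.hasDerivAt_mul_log hz.ne'
    have h2 : HasDerivAt (fun t : ℝ => (t + 1) * Real.log (t + 1)) (Real.log (z + 1) + 1) z :=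
      HasDerivAt.comp_add_const z 1 (Real.hasDerivAt_mul_log (by positivity : z + 1 ≠ 0))
    exact h2.sub (h1.add (Real.hasDerivAt_log hz.ne'))
  have hm : AntitoneOn (fun z : ℝ => (z + 1) * Real.log (z + 1) - (z * Real.log z + Real.log z))
      (Set.Ioi 0) := by
    apply antitoneOn_of_deriv_nonpos (convex_Ioi 0)
    · intro z hz
      exact (hder z hz).continuousAt.continuousWithinAt
    · intro z hz
      rw [interior_Ioi] at hz
      exact (hder z hz).differentiableAt.differentiableWithinAt
    · intro z hz
      rw [interior_Ioi] at hz
      have hz : 0 < z := hz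
      rw [(hder z hz).deriv]
      have h1 := Real.log_le_sub_one_of_pos (show 0 < (z + 1) / z by positivity)
      rw [Real.log_div (by positivity) hz.ne'] at h1
      have : (z + 1) / z - 1 = z⁻¹ := by field_simp; ring
      linarith
  have := hm (show x ∈ Set.Ioi (0 : ℝ) from hx) (show y ∈ Set.Ioi (0 : ℝ) from lt_of_lt_of_le hx hxy) hxy
  simp only at this
  linarith

theorem kphi_le (d : ℝ) (hd : 0 ≤ d) (j : ℕ) :
    Real.exp ((d + ((j : ℝ) + 1)) * Real.log (d + ((j : ℝ) + 1)) - (d + 1) * Real.log (d + 1)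
      - ((j : ℝ) + 1) * Real.log ((j : ℝ) + 1)) ≤ kpp j d := by
  induction j with
  | zero => simp [kpp]
  | succ j ih =>
    rw [kpp_succ]
    have hj : (0 : ℝ) < (j : ℝ) + 1 := by positivity
    have h1 : 1 + d / ((j : ℝ) + 1) =
        Real.exp (Real.log (d + ((j : ℝ) + 1)) - Real.log ((j : ℝ) + 1)) := by
      rw [← Real.log_div (by positivity) hj.ne', Real.exp_log (by positivity)]
      field_simp; ring
    rw [h1]
    refine le_trans ?_ (mul_le_mul_of_nonneg_right ih (Real.exp_nonneg _))
    rw [← Real.exp_add]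
    apply Real.exp_le_exp.mpr
    have := kaux_anti hj (show (j : ℝ) + 1 ≤ d + ((j : ℝ) + 1) by linarith)
    push_cast
    rw [show d + ((j : ℝ) + 1 + 1) = d + ((j : ℝ) + 1) + 1 by ring]
    nlinarith

theorem rpow_self_exp {x : ℝ} (hx : 0 ≤ x) : x ^ x = Real.exp (x * Real.log x) := by
  rcases hx.eq_or_lt with h | h
  · rw [← h]; simp
  · rw [Real.rpow_def_of_pos h, mul_comm]

/-- The factor of the bound. -/
noncomputable def kT (k : ℕ) (c t : ℝ) : ℝ :=
  t ^ t / (1 + t) ^ (1 + t) * ((c + 1) ^ (c + 1) / c ^ c) ^ k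

theorem kT_eq (k : ℕ) {c t : ℝ} (hc : 0 ≤ c) (ht : 0 ≤ t) :
    kT k c t = Real.exp (k * entH c - entH t) := by
  unfold kT entH
  rw [rpow_self_exp hc, rpow_self_exp ht, rpow_self_exp (by positivity : 0 ≤ 1 + t),
    rpow_self_exp (by positivity : 0 ≤ c + 1), ← Real.exp_sub, ← Real.exp_sub, ← Real.exp_nat_mul,
    ← Real.exp_add, add_comm 1 t]
  congr 1; ring

theorem kT_one_le {c t : ℝ} (hc : 0 ≤ c) (hct : c ≤ t) : kT 1 c t ≤ 1 := by
  rw [kT_eq 1 hc (hc.trans hct)]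
  apply Real.exp_le_one_iff.mpr
  have := entH_mono hc hct
  push_cast; linarith

theorem kT_le_kpp (j : ℕ) {c t : ℝ} (hc : 0 ≤ c) (hct : ((j : ℝ) + 1) * c ≤ t) :
    kT (j + 1) c t ≤ kpp j (((j : ℝ) + 1) * c) := by
  have hd : 0 ≤ ((j : ℝ) + 1) * c := by positivity
  rw [kT_eq _ hc (hd.trans hct)]
  refine le_trans (Real.exp_le_exp.mpr ?_) (kphi_le _ hd j)
  have h1 := entH_mono hd hct
  have h2 : (((j + 1 : ℕ) : ℝ)) * entH c - entH (((j : ℝ) + 1) * c) =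
      ((((j : ℝ) + 1) * c) + ((j : ℝ) + 1)) * Real.log ((((j : ℝ) + 1) * c) + ((j : ℝ) + 1))
      - ((((j : ℝ) + 1) * c) + 1) * Real.log ((((j : ℝ) + 1) * c) + 1)
      - ((j : ℝ) + 1) * Real.log ((j : ℝ) + 1) := by
    unfold entH
    have hj : (0 : ℝ) < (j : ℝ) + 1 := by positivity
    rw [show (((j : ℝ) + 1) * c) + ((j : ℝ) + 1) = ((j : ℝ) + 1) * (c + 1) by ring]
    rw [Real.log_mul hj.ne' (by positivity : c + 1 ≠ 0)]
    rcases hc.eq_or_lt with h | h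
    · rw [← h]; simp
    · rw [Real.log_mul hj.ne' h.ne']
      push_cast
      ring
  linarith

/-- Compositions of an integer `d` into `k` nonnegative parts. -/
def kcmp (k : ℕ) (d : ℤ) : Finset (Fin k → ℕ) :=
  if 0 ≤ d then Finset.Nat.antidiagonalTuple k d.toNat else ∅

theorem mem_kcmp {k : ℕ} {d : ℤ} {g : Fin k → ℕ} : g ∈ kcmp k d ↔ ∑ i, (g i : ℤ) = d := by
  unfold kcmp
  split_ifs with h
  · rw [Finset.Nat.mem_antidiagonalTuple]
    rw [← Nat.cast_sum]
    omega
  · rw [← Nat.cast_sum]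
    constructor
    · intro h; simp at h
    · intro h'; exfalso; apply h; rw [← h']; positivity

theorem card_kcmp_nat (k m : ℕ) : (kcmp (k + 1) (m : ℤ)).card = (m + k).choose k := by
  let _ : Fintype {P : Fin (k + 1) → ℕ // ∑ i, P i = m} :=
    Fintype.ofEquiv _ (Sym.equivNatSumOfFintype (Fin (k + 1)) m)
  have e : (kcmp (k + 1) (m : ℤ)).card = Fintype.card {P : Fin (k + 1) → ℕ // ∑ i, P i = m} := by
    rw [Fintype.card_of_subtype]
    intro x
    rw [mem_kcmp, ← Nat.cast_sum]
    exact Nat.cast_inj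
  have e2 := Fintype.card_congr (Sym.equivNatSumOfFintype (Fin (k + 1)) m)
  rw [e, ← e2, Sym.card_sym_eq_choose, Fintype.card_fin]
  rw [show k + 1 + m - 1 = m + k by omega]
  exact Nat.choose_symm_add

theorem card_kcmp (k m : ℕ) : ((kcmp (k + 1) (m : ℤ)).card : ℝ) = kpp k m := by
  rw [card_kcmp_nat]
  induction k with
  | zero => simp [kpp]
  | succ k ih =>
    rw [kpp_succ, ← ih]
    have h := Nat.add_one_mul_choose_eq (m + k) k
    have h' : (((m + k + 1 : ℕ) : ℝ)) * ((m + k).choose k : ℝ) =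
      ((m + (k + 1)).choose (k + 1) : ℝ) * ((k + 1 : ℕ) : ℝ) := by exact_mod_cast h
    push_cast at h'
    field_simp
    rw [← h']; ring

theorem card_kcmp_tangent (k : ℕ) (d : ℝ) (hd : 0 ≤ d) :
    ∃ a : ℝ, ∀ x : ℤ, kpp (k + 1) d + a * (x - d) ≤ ((kcmp (k + 2) x).card : ℝ) := by
  obtain ⟨a, ha, h⟩ := kpp_tangent k d hd
  refine ⟨a, fun x => ?_⟩
  rcases le_or_gt 0 x with hx | hx
  · lift x to ℕ using hx
    rw [card_kcmp (k + 1) x]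
    have := h x (by have : (0 : ℝ) ≤ x := Nat.cast_nonneg x
                    linarith)
    simpa using this
  · have h1 := h (-1) le_rfl
    rw [kpp_neg_one] at h1
    have h2 : (x : ℝ) ≤ -1 := by
      have : x ≤ -1 := by omega
      exact_mod_cast this
    have h3 : (0 : ℝ) ≤ ((kcmp (k + 2) x).card : ℝ) := Nat.cast_nonneg _
    nlinarith

/-- Flows are obtained by distributing the netflow of vertex `0` and continuing. -/
def kflowEquiv (n : ℕ) (M : Fin (n + 2) → ℤ) :
    {f : Fin (n + 2) → Fin (n + 2) → ℕ // IsIntFlow (n + 1) M f} ≃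
    Σ g : {g : Fin (n + 1) → ℕ // g ∈ kcmp (n + 1) (M 0)},
      {f : Fin (n + 1) → Fin (n + 1) → ℕ //
        IsIntFlow n (fun i => M i.succ + (g.1 i : ℤ)) f} where
  toFun f := ⟨⟨fun j => f.1 0 j.succ, by
      rw [mem_kcmp]
      have := f.2.2 0
      simpa [Fin.sum_univ_succ (n := n + 1)] using this⟩,
    ⟨fun i j => f.1 i.succ j.succ, by
      constructor
      · intro i j hij
        exact f.2.1 _ _ (by simpa using hij)
      · intro i
        have := f.2.2 i.succ
        rw [Fin.sum_univ_succ (n := n + 1), Fin.sum_univ_succ (n := n + 1)] at this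
        simp only [Fin.not_lt_zero, if_false, Fin.succ_lt_succ_iff, Fin.succ_pos, if_true] at this
        simp only
        linarith⟩⟩
  invFun p := ⟨Fin.cons (Fin.cons 0 p.1.1) (fun i => Fin.cons 0 (p.2.1 i)), by
      constructor
      · intro i j hij
        refine Fin.cases ?_ (fun i => ?_) i (motive := fun i => ¬ i < j → (Fin.cons (Fin.cons 0 p.1.1) (fun i => Fin.cons 0 (p.2.1 i)) : Fin (n + 2) → Fin (n + 2) → ℕ) i j = 0) hij
        · refine Fin.cases ?_ (fun j => ?_) j
          · simp
          · intro h; simp at h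
        · refine Fin.cases ?_ (fun j => ?_) j
          · simp
          · intro h
            simpa using p.2.2.1 i j (by simpa using h)
      · intro i
        refine Fin.cases ?_ (fun i => ?_) i
        · have := mem_kcmp.1 p.1.2
          simpa [Fin.sum_univ_succ (n := n + 1)] using this
        · have := p.2.2.2 i
          rw [Fin.sum_univ_succ (n := n + 1), Fin.sum_univ_succ (n := n + 1)]
          simp only [Fin.not_lt_zero, if_false, Fin.succ_lt_succ_iff, Fin.succ_pos, if_true,
            Fin.cons_zero, Fin.cons_succ]
          simp only at this
          linarith⟩
  left_inv f := by
    apply Subtype.ext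
    funext i j
    refine Fin.cases ?_ (fun i => ?_) i
    · refine Fin.cases ?_ (fun j => ?_) j
      · simpa using (f.2.1 0 0 (by simp)).symm
      · simp
    · refine Fin.cases ?_ (fun j => ?_) j
      · simpa using (f.2.1 i.succ 0 (by simp)).symm
      · simp
  right_inv p := by
    rfl

theorem kflow_finite (n : ℕ) : ∀ M : Fin (n + 1) → ℤ,
    Finite {f : Fin (n + 1) → Fin (n + 1) → ℕ // IsIntFlow n M f} := by
  induction n with
  | zero =>
    intro M
    have : Subsingleton {f : Fin (0 + 1) → Fin (0 + 1) → ℕ // IsIntFlow 0 M f} := by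
      constructor
      intro f g
      apply Subtype.ext
      funext i j
      have h : ¬ i < j := by
        have := i.isLt; have := j.isLt; simp only [Fin.lt_def]; omega
      rw [f.2.1 i j h, g.2.1 i j h]
    infer_instance
  | succ n ih =>
    intro M
    have := fun g : {g : Fin (n + 1) → ℕ // g ∈ kcmp (n + 1) (M 0)} =>
      ih (fun i => M i.succ + (g.1 i : ℤ))
    exact Finite.of_equiv _ (kflowEquiv n M).symm

theorem Kn_succ (n : ℕ) (M : Fin (n + 2) → ℤ) :
    Kn (n + 1) M = ∑ g ∈ kcmp (n + 1) (M 0), Kn n (fun i => M i.succ + (g i : ℤ)) := by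
  have := fun g : {g : Fin (n + 1) → ℕ // g ∈ kcmp (n + 1) (M 0)} =>
      kflow_finite n (fun i => M i.succ + (g.1 i : ℤ))
  unfold Kn
  rw [Nat.card_congr (kflowEquiv n M), Nat.card_sigma]
  exact Finset.sum_coe_sort (kcmp (n + 1) (M 0)) (fun g =>
    Nat.card {f : Fin (n + 1) → Fin (n + 1) → ℕ // IsIntFlow n (fun i => M i.succ + (g i : ℤ)) f})

theorem Kn_zero (M : Fin 1 → ℤ) (h : M 0 = 0) : 1 ≤ Kn 0 M := by
  have := kflow_finite 0 M
  unfold Kn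
  have : Nonempty {f : Fin (0 + 1) → Fin (0 + 1) → ℕ // IsIntFlow 0 M f} := by
    refine ⟨⟨fun _ _ => 0, fun _ _ _ => rfl, fun i => ?_⟩⟩
    have : i = 0 := by have := i.isLt; apply Fin.ext; simp only [Fin.val_zero]; omega
    subst this
    simp [h]
  exact Nat.card_pos

theorem Kn_one (M : Fin 2 → ℤ) (h : M 0 + M 1 = 0) (h0 : 0 ≤ M 0) : 1 ≤ Kn 1 M := by
  rw [Kn_succ]
  have hm : (fun _ => (M 0).toNat : Fin 1 → ℕ) ∈ kcmp 1 (M 0) := by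
    rw [mem_kcmp]; simp [h0]
  refine le_trans ?_ (Finset.single_le_sum (fun _ _ => Nat.zero_le _) hm)
  apply Kn_zero
  simp [h0]; linarith

/-- Partial sums with offset. -/
def kt (s : ℤ) (M : ℕ → ℤ) (i : ℕ) : ℤ := s + ∑ j ∈ Finset.range (i + 1), M j

/-- The average `c`. -/
noncomputable def kc (r : ℕ) (m t : ℝ) : ℝ := m / ((r : ℝ) + 1) + t / ((r : ℝ) * ((r : ℝ) + 1))

theorem kc_nonneg (j : ℕ) (m t : ℝ) (h : -((j : ℝ) + 1) * m ≤ t) : 0 ≤ kc (j + 1) m t := by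
  have : kc (j + 1) m t = (((j : ℝ) + 1) * m + t) / (((j : ℝ) + 1) * ((j : ℝ) + 1 + 1)) := by
    unfold kc; push_cast; field_simp
  rw [this]
  apply div_nonneg
  · linarith
  · positivity

theorem kc_mul (j : ℕ) (m t : ℝ) :
    ((j : ℝ) + 1) * kc (j + 1) m t = m + (t - m) / ((j : ℝ) + 2) := by
  unfold kc; push_cast; rw [show (j : ℝ) + 1 + 1 = j + 2 by ring]; field_simp; ring

theorem kc_mul_le (j : ℕ) (m t : ℝ) (h : 0 ≤ t - m) :
    ((j : ℝ) + 1) * kc (j + 1) m t ≤ t := by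
  rw [kc_mul]
  have : (t - m) / ((j : ℝ) + 2) ≤ t - m := by
    apply div_le_self h
    have : (0 : ℝ) ≤ j := Nat.cast_nonneg j
    linarith
  linarith

theorem kT_nonneg (k : ℕ) {c t : ℝ} (hc : 0 ≤ c) (ht : 0 ≤ t) : 0 ≤ kT k c t := by
  rw [kT_eq k hc ht]; positivity

/-- symmetric multisets -/
def kSym {m : ℕ} (B : Multiset (Fin m → ℕ)) : Prop :=
  ∀ σ : Equiv.Perm (Fin m), B.map (fun b => b ∘ σ) = B

theorem kcmp_sym (k : ℕ) (d : ℤ) : kSym (kcmp k d).val := by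
  intro σ
  have hinj : Function.Injective (fun b : Fin k → ℕ => b ∘ σ) := σ.surjective.injective_comp_right
  have : (kcmp k d).map ⟨fun b => b ∘ σ, hinj⟩ = kcmp k d := by
    ext g
    rw [Finset.mem_map]
    constructor
    · rintro ⟨b, hb, rfl⟩
      rw [mem_kcmp] at hb ⊢
      rw [← hb]
      exact Equiv.sum_comp σ (fun i => (b i : ℤ))
    · intro hg
      refine ⟨g ∘ σ.symm, ?_, ?_⟩
      · rw [mem_kcmp] at hg ⊢
        rw [← hg]
        exact Equiv.sum_comp σ.symm (fun i => (g i : ℤ))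
      · funext i; simp
  exact congrArg Finset.val this

/-- One step: distribute what sits at the first vertex. -/
def kstep {k : ℕ} (m : ℤ) (B : Multiset (Fin (k + 1) → ℕ)) : Multiset (Fin k → ℕ) :=
  B.bind (fun b => (kcmp k (m + b 0)).val.map (fun g => fun i => b i.succ + g i))

theorem kstep_sym {k : ℕ} (m : ℤ) (B : Multiset (Fin (k + 1) → ℕ)) (hB : kSym B) :
    kSym (kstep m B) := by
  intro σ
  let τ : Equiv.Perm (Fin (k + 1)) := Equiv.Perm.decomposeFin.symm (0, σ)
  have h0 : τ 0 = 0 := by simp [τ]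
  have hs : ∀ i : Fin k, τ i.succ = (σ i).succ := by intro i; simp [τ]
  conv_rhs => rw [← hB τ]
  unfold kstep
  rw [Multiset.map_bind, Multiset.bind_map]
  apply Multiset.bind_congr
  intro b _
  simp only [Function.comp_apply, h0, hs]
  conv_rhs => rw [← kcmp_sym k (m + b 0) σ]
  rw [Multiset.map_map, Multiset.map_map]
  rfl

theorem kstep_sum {k : ℕ} (m : ℤ) (s : ℤ) (B : Multiset (Fin (k + 1) → ℕ))
    (hB : ∀ b ∈ B, ∑ i, (b i : ℤ) = s) : ∀ b ∈ kstep m B, ∑ i, (b i : ℤ) = s + m := by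
  intro b hb
  unfold kstep at hb
  rw [Multiset.mem_bind] at hb
  obtain ⟨a, ha, hb⟩ := hb
  rw [Multiset.mem_map] at hb
  obtain ⟨g, hg, rfl⟩ := hb
  have h1 := mem_kcmp.1 hg
  have h2 := hB a ha
  rw [Fin.sum_univ_succ] at h2
  push_cast
  rw [Finset.sum_add_distrib, h1]
  linarith

theorem ksym_coord {m : ℕ} (B : Multiset (Fin m → ℕ)) (hB : kSym B) (i j : Fin m) (F : ℕ → ℝ) :
    (B.map (fun b => F (b i))).sum = (B.map (fun b => F (b j))).sum := by
  conv_lhs => rw [← hB (Equiv.swap i j)]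
  rw [Multiset.map_map]
  simp

theorem ksym_mean {m : ℕ} (s : ℤ) (B : Multiset (Fin (m + 1) → ℕ)) (hB : kSym B)
    (hs : ∀ b ∈ B, ∑ i, (b i : ℤ) = s) :
    ((m : ℝ) + 1) * (B.map (fun b => (b 0 : ℝ))).sum = B.card * s := by
  have h1 : (B.map (fun b => ∑ i, (b i : ℝ))).sum = B.card * s := by
    rw [Multiset.map_congr rfl (g := fun _ => (s : ℝ))]
    · simp
    · intro b hb
      have := hs b hb
      exact_mod_cast this
  rw [← h1, Multiset.sum_map_sum]
  rw [Finset.sum_congr rfl (fun i _ => ksym_coord B hB i 0 (fun x => (x : ℝ)))]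
  simp

theorem kmain (k : ℕ) : ∀ (M : ℕ → ℤ) (s : ℤ) (B : Multiset (Fin (k + 2) → ℕ)),
    0 ≤ s → s + ∑ j ∈ Finset.range (k + 2), M j = 0 →
    (∀ i < k + 1, 0 ≤ kt s M i ∧ -(((k + 1 - i : ℕ) : ℤ)) * M i ≤ kt s M i) →
    kSym B → (∀ b ∈ B, ∑ i, (b i : ℤ) = s) →
    (B.card : ℝ) * (1 / 2 * ∏ i ∈ Finset.range (k + 1),
      kT (k + 1 - i) (kc (k + 1 - i) (M i) (kt s M i)) (kt s M i)) ≤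
    (B.map (fun b => (Kn (k + 1) (fun i => M i + (b i : ℤ)) : ℝ))).sum := by
  induction k with
  | zero =>
    intro M s B hs0 hsum hyp hB hBs
    have ⟨hy1, hy2⟩ := hyp 0 (by omega)
    have ht : kt s M 0 = s + M 0 := by simp [kt]
    rw [ht] at hy1 hy2
    have hkT : kT 1 (kc 1 (M 0) (kt s M 0)) (kt s M 0) ≤ 1 := by
      have hy2' : -(((0 : ℕ) : ℝ) + 1) * (M 0 : ℝ) ≤ ((kt s M 0 : ℤ) : ℝ) := by
        rw [ht]
        have : -1 * M 0 ≤ s + M 0 := by simpa using hy2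
        have h : ((-1 * M 0 : ℤ) : ℝ) ≤ ((s + M 0 : ℤ) : ℝ) := by exact_mod_cast this
        push_cast at h ⊢; linarith
      apply kT_one_le (kc_nonneg 0 _ _ hy2')
      have hs0' : (0 : ℝ) ≤ s := by exact_mod_cast hs0
      have := kc_mul_le 0 (M 0) (kt s M 0) (by rw [ht]; push_cast; linarith)
      simpa using this
    have hle : (B.card : ℝ) * (1 / 2 * ∏ i ∈ Finset.range (0 + 1),
      kT (0 + 1 - i) (kc (0 + 1 - i) (M i) (kt s M i)) (kt s M i)) ≤ (B.card : ℝ) * (1 / 2) := by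
      apply mul_le_mul_of_nonneg_left _ (Nat.cast_nonneg _)
      simp only [zero_add, Finset.prod_range_one, Nat.sub_zero]
      linarith
    refine hle.trans ?_
    let F : ℕ → ℝ := fun m => if 0 ≤ M 0 + (m : ℤ) then 1 else 0
    have hK : (B.map (fun b => F (b 0))).sum ≤
        (B.map (fun b => (Kn (0 + 1) (fun i => M i + (b i : ℤ)) : ℝ))).sum := by
      apply Multiset.sum_map_le_sum_map
      intro b hb
      simp only [F]
      split_ifs with h
      · have := Kn_one (fun i : Fin 2 => M i + (b i : ℤ)) (by
          have h1 := hBs b hb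
          simp only [Fin.sum_univ_succ, Finset.sum_range_succ] at h1 hsum
          simp at h1 hsum ⊢
          linarith) (by simpa using h)
        exact_mod_cast this
      · positivity
    refine le_trans ?_ hK
    have hsw := ksym_coord B hB 0 1 F
    have h2 : (B.card : ℝ) ≤ (B.map (fun b => F (b 0) + F (b 1))).sum := by
      have : (B.card : ℝ) = (B.map (fun _ => (1 : ℝ))).sum := by simp
      rw [this]
      apply Multiset.sum_map_le_sum_map
      intro b hb
      have h1 := hBs b hb
      simp [Fin.sum_univ_succ] at h1 hy2
      simp only [F]
      split_ifs <;> first | (exfalso; omega) | norm_num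
    rw [Multiset.sum_map_add, ← hsw] at h2
    linarith
  | succ k ih =>
    intro M s B hs0 hsum hyp hB hBs
    have ⟨hy1, hy2⟩ := hyp 0 (by omega)
    have ht : kt s M 0 = s + M 0 := by simp [kt]
    have htt : ∀ i, kt (s + M 0) (fun i => M (i + 1)) i = kt s M (i + 1) := by
      intro i
      unfold kt
      rw [Finset.sum_range_succ' _ (i + 1)]; ring
    have hs0' : (0 : ℝ) ≤ s := by exact_mod_cast hs0
    -- inductive hypothesis
    have IH := ih (fun i => M (i + 1)) (s + M 0) (kstep (M 0) B) (by rw [← ht]; exact hy1)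
      (by rw [Finset.sum_range_succ'] at hsum; linarith)
      (by
        intro i hi
        rw [htt]
        have := hyp (i + 1) (by omega)
        rwa [show k + 1 + 1 - (i + 1) = k + 1 - i by omega] at this)
      (kstep_sym _ _ hB) (kstep_sum _ _ _ hBs)
    have hR : (B.map (fun b => (Kn (k + 1 + 1) (fun i => M i + (b i : ℤ)) : ℝ))).sum =
        ((kstep (M 0) B).map
          (fun b => (Kn (k + 1) (fun i => M (i + 1) + (b i : ℤ)) : ℝ))).sum := by
      unfold kstep
      rw [Multiset.map_bind, Multiset.sum_bind]
      congr 1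
      apply Multiset.map_congr rfl
      intro b _
      rw [Kn_succ, Multiset.map_map]
      push_cast
      simp only [Finset.sum, Fin.val_zero, Fin.val_succ, Function.comp_def, Nat.cast_add, add_assoc]
    rw [hR]
    refine le_trans ?_ IH
    rw [Finset.prod_range_succ']
    have hP : ∏ i ∈ Finset.range (k + 1), kT (k + 1 - i)
        (kc (k + 1 - i) (M (i + 1)) (kt (s + M 0) (fun i => M (i + 1)) i))
        (kt (s + M 0) (fun i => M (i + 1)) i) =
      ∏ i ∈ Finset.range (k + 1), kT (k + 1 + 1 - (i + 1))
        (kc (k + 1 + 1 - (i + 1)) (M (i + 1)) (kt s M (i + 1))) (kt s M (i + 1)) := by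
      apply Finset.prod_congr rfl
      intro i _
      rw [htt, show k + 1 + 1 - (i + 1) = k + 1 - i by omega]
    rw [hP]
    have hP0 : 0 ≤ ∏ i ∈ Finset.range (k + 1), kT (k + 1 + 1 - (i + 1))
        (kc (k + 1 + 1 - (i + 1)) (M (i + 1)) (kt s M (i + 1))) (kt s M (i + 1)) := by
      apply Finset.prod_nonneg
      intro i hi
      rw [Finset.mem_range] at hi
      have ⟨h1, h2⟩ := hyp (i + 1) (by omega)
      obtain ⟨j, hj⟩ : ∃ j, k + 1 + 1 - (i + 1) = j + 1 := ⟨k - i, by omega⟩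
      rw [hj] at h2 ⊢
      apply kT_nonneg
      · apply kc_nonneg
        exact_mod_cast h2
      · exact_mod_cast h1
    set P := ∏ i ∈ Finset.range (k + 1), kT (k + 1 + 1 - (i + 1))
        (kc (k + 1 + 1 - (i + 1)) (M (i + 1)) (kt s M (i + 1))) (kt s M (i + 1))
    -- the first factor
    have hc : 0 ≤ kc (k + 1 + 1) (M 0) (kt s M 0) := by
      apply kc_nonneg
      have h2 := hy2
      rw [Nat.sub_zero] at h2
      exact_mod_cast h2
    have hle := kT_le_kpp (k + 1) hc (t := kt s M 0)
      (kc_mul_le (k + 1) _ _ (by rw [ht]; push_cast; linarith))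
    set d : ℝ := (((k + 1 : ℕ) : ℝ) + 1) * kc (k + 1 + 1) (M 0) (kt s M 0) with hd
    have hd0 : 0 ≤ d := by positivity
    obtain ⟨a, ha⟩ := card_kcmp_tangent k d hd0
    have hcard : (B.card : ℝ) * kpp (k + 1) d ≤ ((kstep (M 0) B).card : ℝ) := by
      have h1 : ((kstep (M 0) B).card : ℝ) =
          (B.map (fun b => ((kcmp (k + 2) (M 0 + b 0)).card : ℝ))).sum := by
        unfold kstep
        rw [Multiset.card_bind]
        simp only [Function.comp_def, Multiset.card_map, Finset.card_val]
        rw [Nat.cast_multiset_sum, Multiset.map_map]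
        rfl
      rw [h1]
      have h2 : (B.map (fun b => kpp (k + 1) d + a * ((M 0 : ℝ) - d) + a * (b 0 : ℝ))).sum ≤
          (B.map (fun b => ((kcmp (k + 2) (M 0 + b 0)).card : ℝ))).sum := by
        apply Multiset.sum_map_le_sum_map
        intro b _
        have := ha (M 0 + b 0)
        push_cast at this
        linarith
      refine le_trans (le_of_eq ?_) h2
      rw [Multiset.sum_map_add, Multiset.sum_map_mul_left]
      have h3 := ksym_mean s B hB hBs
      have h4 : d = M 0 + s / (((k + 2 : ℕ) : ℝ) + 1) := by
        rw [hd, kc_mul, ht]; push_cast; ring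
      have h5 : (B.map (fun b => (b 0 : ℝ))).sum = B.card * (s / (((k + 2 : ℕ) : ℝ) + 1)) := by
        rw [← mul_div_assoc, ← h3]
        field_simp
      rw [h5]
      simp only [Multiset.map_const', Multiset.sum_replicate, nsmul_eq_mul]
      rw [show (M 0 : ℝ) - d = - (s / (((k + 2 : ℕ) : ℝ) + 1)) by rw [h4]; ring]
      ring
    have hfin : (B.card : ℝ) * kT (k + 1 + 1) (kc (k + 1 + 1) (M 0) (kt s M 0)) (kt s M 0) ≤
        ((kstep (M 0) B).card : ℝ) :=
      (mul_le_mul_of_nonneg_left hle (Nat.cast_nonneg _)).trans hcard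
    have := mul_le_mul_of_nonneg_right hfin (by positivity : 0 ≤ 1 / 2 * P)
    rw [Nat.sub_zero]
    linarith

/-- **Theorem (general lower bound, part 1).** If `s_k ≥ max{0, −(n−k)·N_k}` for
all `0 ≤ k ≤ n−1`, then
`K_n(N) ≥ (1/n²) · ∏_{k=0}^{n−1} s_k^{s_k}/(1+s_k)^{1+s_k}
  · ∏_{k=1}^{n} ((c_k+1)^{c_k+1}/c_k^{c_k})^k`
(real powers, with the convention `0^0 = 1`). -/
theorem kostant_general_lower_bound_one (n : ℕ) (hn : 1 ≤ n) (N : Fin (n + 1) → ℤ)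
    (hsum : ∑ i, N i = 0)
    (hs : ∀ k : Fin n,
      max 0 (-((n : ℤ) - (k : ℕ)) * N k.castSucc) ≤ sPartial n N k) :
    (1 / ((n : ℝ) ^ 2)) *
      (∏ k ∈ Finset.range n,
        ((sPartial n N k : ℤ) : ℝ) ^ ((sPartial n N k : ℤ) : ℝ) /
          (1 + ((sPartial n N k : ℤ) : ℝ)) ^ (1 + ((sPartial n N k : ℤ) : ℝ))) *
      (∏ k ∈ Finset.Icc 1 n,
        ((cAvg n N k + 1) ^ (cAvg n N k + 1) / cAvg n N k ^ cAvg n N k) ^ k) ≤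
      (Kn n N : ℝ) := by
  set M : ℕ → ℤ := fun j => if h : j < n + 1 then N ⟨j, h⟩ else 0 with hM
  have hMN : ∀ i : Fin (n + 1), M i = N i := fun i => dif_pos i.isLt
  have hS : ∀ k ≤ n, sPartial n N k = kt 0 M k := by
    intro k hk
    unfold sPartial kt
    have h1 : ∀ j : Fin (n + 1), (if (j : ℕ) ≤ k then N j else 0) =
        (fun j : ℕ => if j ≤ k then M j else 0) j := fun j => by simp only [hMN]
    rw [Finset.sum_congr rfl (fun j _ => h1 j),
      Fin.sum_univ_eq_sum_range (fun j : ℕ => if j ≤ k then M j else 0) (n + 1),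
      ← Finset.sum_filter, zero_add]
    apply Finset.sum_congr _ (fun _ _ => rfl)
    ext j
    simp only [Finset.mem_filter, Finset.mem_range]
    omega
  have hC : ∀ k ≤ n, cAvg n N k = kc k (M (n - k)) (kt 0 M (n - k)) := by
    intro k hk
    unfold cAvg kc
    rw [hS (n - k) (by omega)]
    congr 2
    have hlt : n - k < n + 1 := by omega
    rw [Finset.sum_eq_single (⟨n - k, hlt⟩ : Fin (n + 1))]
    · simp [hM]
    · intro b _ hb
      rw [if_neg]
      intro h
      exact hb (Fin.ext h)
    · intro h; exact absurd (Finset.mem_univ _) h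
  have hyp : ∀ i < n, 0 ≤ kt 0 M i ∧ -(((n - i : ℕ) : ℤ)) * M i ≤ kt 0 M i := by
    intro i hi
    have h := hs ⟨i, hi⟩
    rw [max_le_iff] at h
    simp only at h
    rw [hS i (by omega)] at h
    refine ⟨h.1, ?_⟩
    have h2 := h.2
    rw [← hMN] at h2
    rw [Nat.cast_sub hi.le]
    exact h2
  have hsumM : ∑ j ∈ Finset.range (n + 1), M j = 0 := by
    rw [← hsum, ← Fin.sum_univ_eq_sum_range]
    exact Finset.sum_congr rfl (fun i _ => hMN i)
  -- rewrite the left-hand side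
  have hL : (∏ k ∈ Finset.range n,
        ((sPartial n N k : ℤ) : ℝ) ^ ((sPartial n N k : ℤ) : ℝ) /
          (1 + ((sPartial n N k : ℤ) : ℝ)) ^ (1 + ((sPartial n N k : ℤ) : ℝ))) *
      (∏ k ∈ Finset.Icc 1 n,
        ((cAvg n N k + 1) ^ (cAvg n N k + 1) / cAvg n N k ^ cAvg n N k) ^ k) =
      ∏ i ∈ Finset.range n, kT (n - i) (kc (n - i) (M i) (kt 0 M i)) (kt 0 M i) := by
    have h1 : (∏ k ∈ Finset.Icc 1 n,
        ((cAvg n N k + 1) ^ (cAvg n N k + 1) / cAvg n N k ^ cAvg n N k) ^ k) =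
        ∏ i ∈ Finset.range n, ((cAvg n N (n - i) + 1) ^ (cAvg n N (n - i) + 1) /
          cAvg n N (n - i) ^ cAvg n N (n - i)) ^ (n - i) := by
      apply Finset.prod_nbij' (fun k => n - k) (fun k => n - k)
      · intro k hk; simp only [Finset.mem_Icc, Finset.mem_range] at *; omega
      · intro k hk; simp only [Finset.mem_Icc, Finset.mem_range] at *; omega
      · intro k hk; simp only [Finset.mem_Icc] at *; omega
      · intro k hk; simp only [Finset.mem_range] at *; omega
      · intro k hk
        simp only [Finset.mem_Icc] at hk
        rw [show n - (n - k) = k by omega]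
    rw [h1, ← Finset.prod_mul_distrib]
    apply Finset.prod_congr rfl
    intro i hi
    rw [Finset.mem_range] at hi
    rw [hS i hi.le, hC (n - i) (by omega), show n - (n - i) = i by omega]
    rfl
  rw [mul_assoc, hL]
  clear hL hC hS hs
  obtain ⟨k, rfl⟩ : ∃ k, n = k + 1 := ⟨n - 1, by omega⟩
  rcases Nat.eq_zero_or_pos k with hk | hk
  · subst hk
    have ⟨hy1, hy2⟩ := hyp 0 (by omega)
    have ht : kt 0 M 0 = M 0 := by simp [kt]
    have hK : 1 ≤ Kn 1 N := by
      apply Kn_one N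
      · simpa [Fin.sum_univ_succ] using hsum
      · rw [← hMN 0]; rw [ht] at hy1; exact hy1
    have hK' : (1 : ℝ) ≤ (Kn (0 + 1) N : ℝ) := by exact_mod_cast hK
    refine le_trans ?_ hK'
    have hy1' : (0 : ℝ) ≤ ((M 0 : ℤ) : ℝ) := by rw [ht] at hy1; exact_mod_cast hy1
    have h1 := kT_one_le (c := kc 1 (M 0) (kt 0 M 0)) (t := kt 0 M 0)
      (kc_nonneg 0 _ _ (by rw [ht]; push_cast; linarith))
      (by have := kc_mul_le 0 (M 0) (kt 0 M 0) (by rw [ht]; simp)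
          simpa using this)
    simpa using h1
  · have hmain := kmain k M 0 {fun _ => 0} le_rfl (by rw [zero_add]; exact hsumM) hyp
      (by intro σ; simp; rfl) (by simp)
    simp only [Multiset.card_singleton, Nat.cast_one, one_mul, Multiset.map_singleton,
      Multiset.sum_singleton, Nat.cast_zero, add_zero] at hmain
    rw [show (fun i : Fin (k + 1 + 1) => M i) = N from funext hMN] at hmain
    refine le_trans ?_ hmain
    apply mul_le_mul_of_nonneg_right
    · have hk' : (1 : ℝ) ≤ k := by exact_mod_cast hk
      apply one_div_le_one_div_of_le (by norm_num)
      push_cast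
      nlinarith
    · apply Finset.prod_nonneg
      intro i hi
      rw [Finset.mem_range] at hi
      have ⟨h1, h2⟩ := hyp i hi
      obtain ⟨j, hj⟩ : ∃ j, k + 1 - i = j + 1 := ⟨k - i, by omega⟩
      rw [hj] at h2 ⊢
      apply kT_nonneg
      · apply kc_nonneg
        exact_mod_cast h2
      · exact_mod_cast h1
end
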